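/- arXiv:2602.08721 — 4 statements merged into one kernel-verified Lean document; each statement's English description precedes it below -/
import Mathlib

section
/- Let F, G : ℕ × ℕ → ℂ be two functions satisfying the Wilf–Zeilberger relation F(n+1,k) − F(n,k) = G(n,k+1) − G(n,k) for all n, k ∈ ℕ. Assume that (i) the series ∑_{k≥0} F(0,k) converges, (ii) the series ∑_{n≥0} G(n,0) converges, and (iii) for each n ∈ ℕ the limit g(n) := lim_{k→∞} G(n,k) exists and the series ∑_{n≥0} g(n) converges. Then the limit L := lim_{n→∞} ∑_{k≥0} F(n,k) exists and is finite, and ∑_{k≥0} F(0,k) + ∑_{n≥0} g(n) = ∑_{n≥0} G(n,0) + L. -/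
/-!
The Wilf–Zeilberger relation is a discrete curl-free condition. Summed over the rectangle
`[0, n) × [0, N)` it telescopes in either direction and becomes an identity between the sums of
`F` and `G` along the four sides. For fixed `n`, letting `N → ∞` gives
`∑_{k≥0} F n k = ∑_{k≥0} F 0 k + ∑_{i<n} g i - ∑_{i<n} G i 0`; then let `n → ∞`.
-/

open Filter Topology

/-- A Wilf–Zeilberger pair: the relation that lets sums of `F n k` over `k` at different `n` be
compared through `G`. Values may lie in any additive commutative group, and both
indices range over `ℕ`. -/
def IsWZPair {M : Type*} [AddCommGroup M] (F G : ℕ → ℕ → M) : Prop :=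
  ∀ n k : ℕ, F (n + 1) k - F n k = G n (k + 1) - G n k

section

variable {M : Type*} [AddCommGroup M] {F G : ℕ → ℕ → M}

namespace IsWZPair

theorem sum_range_sub_sum_range (h : IsWZPair F G) (n N : ℕ) :
    ∑ k ∈ Finset.range N, F n k - ∑ k ∈ Finset.range N, F 0 k =
      ∑ i ∈ Finset.range n, G i N - ∑ i ∈ Finset.range n, G i 0 :=
  calc
    _ = ∑ k ∈ Finset.range N, ∑ i ∈ Finset.range n, (F (i + 1) k - F i k) := by
      rw [← Finset.sum_sub_distrib]
      exact Finset.sum_congr rfl fun k _ => (Finset.sum_range_sub (F · k) n).symm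
    _ = ∑ i ∈ Finset.range n, ∑ k ∈ Finset.range N, (G i (k + 1) - G i k) := by
      rw [Finset.sum_comm]
      simp only [h _ _]
    _ = _ := by
      rw [← Finset.sum_sub_distrib]
      exact Finset.sum_congr rfl fun i _ => Finset.sum_range_sub (G i) N

variable [TopologicalSpace M] [IsTopologicalAddGroup M]

theorem tendsto_sum_range (h : IsWZPair F G) {S₁ : M}
    (h₁ : Tendsto (fun N => ∑ k ∈ Finset.range N, F 0 k) atTop (𝓝 S₁)) {g : ℕ → M}
    (hg : ∀ n : ℕ, Tendsto (fun k => G n k) atTop (𝓝 (g n))) (n : ℕ) :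
    Tendsto (fun N => ∑ k ∈ Finset.range N, F n k) atTop
      (𝓝 (S₁ + (∑ i ∈ Finset.range n, g i - ∑ i ∈ Finset.range n, G i 0))) := by
  have hG : Tendsto (fun N => ∑ i ∈ Finset.range n, G i N) atTop
      (𝓝 (∑ i ∈ Finset.range n, g i)) :=
    tendsto_finsetSum _ fun i _ => hg i
  refine (h₁.add (hG.sub_const (∑ i ∈ Finset.range n, G i 0))).congr fun N => ?_
  rw [← h.sum_range_sub_sum_range, add_sub_cancel]

end IsWZPair

theorem wz_summation_general [TopologicalSpace M] [IsTopologicalAddGroup M] (h : IsWZPair F G)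
    {S₁ : M} (h₁ : Tendsto (fun N => ∑ k ∈ Finset.range N, F 0 k) atTop (𝓝 S₁))
    {S₂ : M} (h₂ : Tendsto (fun N => ∑ n ∈ Finset.range N, G n 0) atTop (𝓝 S₂))
    {g : ℕ → M} (hg : ∀ n : ℕ, Tendsto (fun k => G n k) atTop (𝓝 (g n)))
    {S₃ : M} (h₃ : Tendsto (fun N => ∑ n ∈ Finset.range N, g n) atTop (𝓝 S₃)) :
    ∃ (s : ℕ → M) (L : M),
      (∀ n : ℕ, Tendsto (fun N => ∑ k ∈ Finset.range N, F n k) atTop (𝓝 (s n))) ∧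
      Tendsto s atTop (𝓝 L) ∧
      S₁ + S₃ = S₂ + L :=
  ⟨_, S₁ + (S₃ - S₂), h.tendsto_sum_range h₁ hg, (h₃.sub h₂).const_add S₁, by abel⟩

end

/-- **Wilf–Zeilberger summation lemma.**
If `F G : ℕ → ℕ → ℂ` satisfy the WZ relation
`F (n+1) k - F n k = G n (k+1) - G n k`, the series `∑_{k≥0} F 0 k` converges (to `S₁`),
the series `∑_{n≥0} G n 0` converges (to `S₂`), and for each `n` the limit
`g n = lim_{k→∞} G n k` exists with `∑_{n≥0} g n` convergent (to `S₃`), then for each `n`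
the series `∑_{k≥0} F n k` converges, its value `s n` tends to a finite limit `L` as
`n → ∞`, and `S₁ + S₃ = S₂ + L`. -/
theorem wz_summation
    (F G : ℕ → ℕ → ℂ)
    (hWZ : ∀ n k : ℕ, F (n + 1) k - F n k = G n (k + 1) - G n k)
    (S₁ : ℂ)
    (h₁ : Tendsto (fun N => ∑ k ∈ Finset.range N, F 0 k) atTop (𝓝 S₁))
    (S₂ : ℂ)
    (h₂ : Tendsto (fun N => ∑ n ∈ Finset.range N, G n 0) atTop (𝓝 S₂))
    (g : ℕ → ℂ)
    (hg : ∀ n : ℕ, Tendsto (fun k => G n k) atTop (𝓝 (g n)))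
    (S₃ : ℂ)
    (h₃ : Tendsto (fun N => ∑ n ∈ Finset.range N, g n) atTop (𝓝 S₃)) :
    ∃ (s : ℕ → ℂ) (L : ℂ),
      (∀ n : ℕ, Tendsto (fun N => ∑ k ∈ Finset.range N, F n k) atTop (𝓝 (s n))) ∧
      Tendsto s atTop (𝓝 L) ∧
      S₁ + S₃ = S₂ + L :=
  wz_summation_general hWZ h₁ h₂ hg h₃
end

section
/- The series identity ∑_{n≥1} (−1/2^10)^n · ((1)_n)^5 / ((1/2)_n)^5 · (205n² − 160n + 32)/n^5 = −2ζ(3) holds, where ζ is the Riemann zeta function. -/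
/-- The rising factorial (Pochhammer symbol) `(a)ₙ = a(a+1)⋯(a+n-1)`. -/
noncomputable def risingFactorial (a : ℝ) (n : ℕ) : ℝ :=
  ∏ i ∈ Finset.range n, (a + i)

/-!
Since `(1)ₙ / (1/2)ₙ = 4ⁿ / centralBinom n`, the series is minus
`∑ (-1)ⁿ (205 n² + 250 n + 77) / ((n + 1) centralBinom (n + 1))⁵`. Its `n`-th term is `G n 0` for a
Wilf–Zeilberger pair `F (n + 1) k - F n k = G n (k + 1) - G n k` with `F 0 k = 2 / (k + 1)³`. Both
functions are dominated by `3 / (n + k + 1)²`, so the boundary terms at infinity vanish and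
`∑ₙ G n 0 = ∑ₖ F 0 k = 2 ζ(3)`.
-/

open Filter Topology

namespace AperyZetaThree

section WZPair

/-- `(F, G)` is a Wilf–Zeilberger pair: `G n k dn + F n k dk` is a closed discrete 1-form on
`ℕ × ℕ`. -/
def IsWZPair {E : Type*} [AddGroup E] (F G : ℕ → ℕ → E) : Prop :=
  ∀ n k, F (n + 1) k - F n k = G n (k + 1) - G n k

lemma IsWZPair.tsum_sub_tsum_succ {E : Type*} [AddCommGroup E] [TopologicalSpace E]
    [IsTopologicalAddGroup E] [T2Space E] {F G : ℕ → ℕ → E} (h : IsWZPair F G) {n : ℕ}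
    (hF : Summable (F n)) (hF' : Summable (F (n + 1))) (hG : Tendsto (G n) atTop (𝓝 0)) :
    ∑' k, F n k - ∑' k, F (n + 1) k = G n 0 := by
  have hsum := (hF.hasSum.sub hF'.hasSum).tendsto_sum_nat
  have htele (K : ℕ) : ∑ k ∈ Finset.range K, (F n k - F (n + 1) k) = G n 0 - G n K := by
    rw [← Finset.sum_range_sub']
    exact Finset.sum_congr rfl fun k _ => by rw [← neg_sub, h, neg_sub]
  simp only [htele] at hsum
  simpa using tendsto_nhds_unique hsum (hG.const_sub (G n 0))

variable {E : Type*} [NormedAddCommGroup E] {F G : ℕ → ℕ → E} {u : ℕ → ℝ}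

lemma tendsto_tsum_zero_of_norm_le_add (hu : Summable u) (hF : ∀ n k, ‖F n k‖ ≤ u (n + k)) :
    Tendsto (fun n => ∑' k, F n k) atTop (𝓝 0) := by
  refine squeeze_zero_norm (fun n => ?_) (tendsto_sum_nat_add u)
  exact tsum_of_norm_bounded ((summable_nat_add_iff n).2 hu).hasSum
    fun k => (hF n k).trans_eq (by rw [add_comm])

theorem IsWZPair.hasSum_of_norm_le [CompleteSpace E] (h : IsWZPair F G) (hu : Summable u)
    (hF : ∀ n k, ‖F n k‖ ≤ u (n + k)) (hG : ∀ n k, ‖G n k‖ ≤ u (n + k)) :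
    HasSum (fun n => G n 0) (∑' k, F 0 k) := by
  have hshift (n : ℕ) : Summable fun k => u (n + k) := by
    simpa only [add_comm n] using (summable_nat_add_iff n).2 hu
  have hFs (n : ℕ) : Summable (F n) := .of_norm_bounded (hshift n) (hF n)
  have hG0 (n : ℕ) : Tendsto (G n) atTop (𝓝 0) :=
    squeeze_zero_norm (hG n) (hshift n).tendsto_atTop_zero
  have hGs : Summable fun n => G n 0 := .of_norm_bounded hu fun n => hG n 0
  have hpartial (N : ℕ) : ∑ n ∈ Finset.range N, G n 0 = ∑' k, F 0 k - ∑' k, F N k := by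
    simp only [← h.tsum_sub_tsum_succ (hFs _) (hFs _) (hG0 _)]
    exact Finset.sum_range_sub' (fun n => ∑' k, F n k) N
  refine (hGs.hasSum_iff_tendsto_nat).2 ?_
  simpa only [hpartial, sub_zero] using
    (tendsto_tsum_zero_of_norm_le_add hu hF).const_sub (∑' k, F 0 k)

end WZPair

/-- The reciprocal `1 / B(a + 1, b + 1) = (a + b + 1)! / (a! b!)` of a value of Euler's beta
function. -/
def invBeta (a b : ℕ) : ℕ :=
  (a + b + 1) * (a + b).choose a

lemma invBeta_comm (a b : ℕ) : invBeta a b = invBeta b a := by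
  rw [invBeta, invBeta, Nat.choose_symm_add, add_comm a b]

lemma succ_mul_invBeta_succ_left (a b : ℕ) :
    (a + 1) * invBeta (a + 1) b = (a + b + 2) * invBeta a b := by
  have h := Nat.add_one_mul_choose_eq (a + b) a
  rw [invBeta, invBeta, h, show a + 1 + b = a + b + 1 by ring]
  ring

lemma succ_mul_invBeta_succ_right (a b : ℕ) :
    (b + 1) * invBeta a (b + 1) = (a + b + 2) * invBeta a b := by
  rw [invBeta_comm a, succ_mul_invBeta_succ_left, invBeta_comm a, add_comm a]

lemma add_succ_le_invBeta (a b : ℕ) : a + b + 1 ≤ invBeta a b :=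
  Nat.le_mul_of_pos_right _ (Nat.choose_pos (Nat.le_add_right a b))

lemma invBeta_zero_left (b : ℕ) : invBeta 0 b = b + 1 := by
  simp [invBeta]

lemma two_mul_invBeta_self (n : ℕ) : 2 * invBeta n n = (n + 1) * (n + 1).centralBinom := by
  rw [Nat.succ_mul_centralBinom_succ, invBeta, ← two_mul, Nat.centralBinom]
  ring

/-- The hypergeometric kernel `(-1)ⁿ (n!)² / (2n)! * B(n + 1, n + k + 1)⁴`; both members of the
WZ pair are rational multiples of it. -/
noncomputable def wzKernel (n k : ℕ) : ℝ :=
  (-1) ^ n / (n.centralBinom * (invBeta n (n + k) : ℝ) ^ 4)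

/-- The first member of the WZ pair, with `F 0 k = 2 / (k + 1)³`. -/
noncomputable def wzF (n k : ℕ) : ℝ :=
  (3 * n + 2 * k + 2) * wzKernel n k

/-- The rational function certifying the WZ pair, normalised as `wzG / wzKernel` instead of the
customary `wzG / wzF`. -/
noncomputable def wzCertificate (n k : ℝ) : ℝ :=
  ((2 * n + k + 1) ^ 2 + (3 * n + k + 2) ^ 2
    - (n + 1) ^ 5 * (3 * n + 2 * k + 3) / (2 * n + k + 2) ^ 4) / (2 * (2 * n + 1))

/-- The second member of the WZ pair. -/
noncomputable def wzG (n k : ℕ) : ℝ :=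
  wzCertificate n k * wzKernel n k

lemma wzKernel_succ_right (n k : ℕ) :
    wzKernel n (k + 1) = ((n + k + 1) / (2 * n + k + 2)) ^ 4 * wzKernel n k := by
  have hB : (invBeta n (n + (k + 1)) : ℝ)
      = (2 * n + k + 2) / (n + k + 1) * invBeta n (n + k) := by
    have h := succ_mul_invBeta_succ_right n (n + k)
    rify at h
    rw [div_mul_eq_mul_div, eq_div_iff (by positivity), ← add_assoc]
    linear_combination h
  rw [wzKernel, wzKernel, hB]
  field_simp

lemma wzKernel_succ_left (n k : ℕ) :
    wzKernel (n + 1) k = -(n + 1) / (2 * (2 * n + 1)) *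
      ((n + 1) * (n + k + 1) / ((2 * n + k + 2) * (2 * n + k + 3))) ^ 4 * wzKernel n k := by
  have hC : ((n + 1).centralBinom : ℝ) = 2 * (2 * n + 1) / (n + 1) * n.centralBinom := by
    rw [div_mul_eq_mul_div, eq_div_iff (by positivity), mul_comm]
    exact_mod_cast Nat.succ_mul_centralBinom_succ n
  have hB : (invBeta (n + 1) (n + 1 + k) : ℝ) = (2 * n + k + 2) * (2 * n + k + 3) /
      ((n + 1) * (n + k + 1)) * invBeta n (n + k) := by
    have hl := succ_mul_invBeta_succ_left n (n + k + 1)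
    have hr := succ_mul_invBeta_succ_right n (n + k)
    rify at hl hr
    rw [div_mul_eq_mul_div, eq_div_iff (by positivity), add_right_comm n 1 k]
    linear_combination (n + k + 1 : ℝ) * hl + (2 * n + k + 3 : ℝ) * hr
  rw [wzKernel, wzKernel, hC, hB, pow_succ]
  field_simp

theorem isWZPair_wzF_wzG : IsWZPair wzF wzG := by
  intro n k
  have hden : 2 * (n : ℝ) + (k + 1) + 2 = 2 * n + k + 3 := by ring
  simp only [wzF, wzG, wzCertificate, wzKernel_succ_left, wzKernel_succ_right]
  push_cast
  rw [hden]
  field_simp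
  ring

lemma wzF_zero_left (k : ℕ) : wzF 0 k = 2 * (1 / (k + 1) ^ 3) := by
  simp only [wzF, wzKernel, zero_add, invBeta_zero_left, Nat.centralBinom_zero]
  push_cast
  field_simp
  ring

lemma wzG_zero_right (n : ℕ) :
    wzG n 0 = (-1) ^ n * (205 * n ^ 2 + 250 * n + 77) /
      ((n + 1) * (n + 1).centralBinom) ^ 5 := by
  have hB : (2 * invBeta n n : ℝ) = (n + 1) * (n + 1).centralBinom := by
    exact_mod_cast two_mul_invBeta_self n
  have hC : (2 * (2 * n + 1) * n.centralBinom : ℝ) = (n + 1) * (n + 1).centralBinom := by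
    exact_mod_cast (Nat.succ_mul_centralBinom_succ n).symm
  have hR : wzCertificate n 0 = (205 * n ^ 2 + 250 * n + 77) / (32 * (2 * n + 1)) := by
    rw [wzCertificate, show (2 * n + 0 + 2 : ℝ) = 2 * (n + 1) by ring]
    field_simp
    ring
  calc wzG n 0
      = (-1) ^ n * (205 * n ^ 2 + 250 * n + 77) /
          ((2 * (2 * n + 1) * n.centralBinom) * (2 * invBeta n n) ^ 4) := by
        rw [wzG, wzKernel, Nat.cast_zero, hR, add_zero]
        field_simp
        norm_num
    _ = _ := by rw [hB, hC, ← pow_succ']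

lemma abs_wzKernel_le (n k : ℕ) : |wzKernel n k| ≤ 1 / (2 * n + k + 1) ^ 4 := by
  have hC : (1 : ℝ) ≤ n.centralBinom := by exact_mod_cast n.centralBinom_pos
  have hB : (2 * n + k + 1 : ℝ) ≤ invBeta n (n + k) := by
    have h := add_succ_le_invBeta n (n + k)
    rw [← add_assoc, ← two_mul] at h
    exact_mod_cast h
  rw [wzKernel, abs_div, abs_neg_one_pow, abs_of_nonneg (by positivity)]
  gcongr
  exact (pow_le_pow_left₀ (by positivity) hB 4).trans (le_mul_of_one_le_left (by positivity) hC)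

lemma abs_wzCertificate_le {n k : ℝ} (hn : 0 ≤ n) (hk : 0 ≤ k) :
    |wzCertificate n k| ≤ 5 / 2 * (2 * n + k + 1) ^ 2 := by
  have hsq : (2 * n + k + 1) ^ 2 + (3 * n + k + 2) ^ 2 ≤ 5 * (2 * n + k + 1) ^ 2 := by
    nlinarith
  have hfrac : (n + 1) ^ 5 * (3 * n + 2 * k + 3) / (2 * n + k + 2) ^ 4
      ≤ 5 * (2 * n + k + 1) ^ 2 := calc
    _ = ((n + 1) / (2 * n + k + 2)) ^ 4 * ((n + 1) * (3 * n + 2 * k + 3)) := by field_simp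
    _ ≤ 1 ^ 4 * ((n + 1) * (3 * n + 2 * k + 3)) := by
      gcongr
      exact div_le_one_of_le₀ (by linarith) (by positivity)
    _ ≤ 5 * (2 * n + k + 1) ^ 2 := by nlinarith [mul_nonneg hn hk]
  have hnum := abs_sub_le_of_nonneg_of_le (by positivity) hsq (by positivity) hfrac
  rw [wzCertificate, abs_div, abs_of_nonneg (by positivity : 0 ≤ 2 * (2 * n + 1)),
    div_mul_eq_mul_div]
  exact div_le_div₀ (by positivity) hnum two_pos (by linarith)

lemma abs_wzF_le (n k : ℕ) : |wzF n k| ≤ 3 / ((n + k : ℕ) + 1) ^ 2 := by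
  rw [wzF, abs_mul, abs_of_nonneg (by positivity)]
  calc (3 * n + 2 * k + 2 : ℝ) * |wzKernel n k|
      ≤ 3 * (2 * n + k + 1) ^ 2 * (1 / (2 * n + k + 1) ^ 4) := by
        gcongr
        · nlinarith [(n.cast_nonneg : (0 : ℝ) ≤ n), (k.cast_nonneg : (0 : ℝ) ≤ k)]
        · exact abs_wzKernel_le n k
    _ = 3 / (2 * n + k + 1) ^ 2 := by field_simp
    _ ≤ 3 / ((n + k : ℕ) + 1) ^ 2 := by
        push_cast
        gcongr
        linarith [(n.cast_nonneg : (0 : ℝ) ≤ n)]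

lemma abs_wzG_le (n k : ℕ) : |wzG n k| ≤ 3 / ((n + k : ℕ) + 1) ^ 2 := by
  rw [wzG, abs_mul]
  calc |wzCertificate n k| * |wzKernel n k|
      ≤ 5 / 2 * (2 * n + k + 1) ^ 2 * (1 / (2 * n + k + 1) ^ 4) := by
        gcongr
        · exact abs_wzCertificate_le n.cast_nonneg k.cast_nonneg
        · exact abs_wzKernel_le n k
    _ = 5 / 2 / (2 * n + k + 1) ^ 2 := by field_simp
    _ ≤ 3 / ((n + k : ℕ) + 1) ^ 2 := by
        push_cast
        gcongr
        · norm_num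
        · linarith [(n.cast_nonneg : (0 : ℝ) ≤ n)]

lemma riemannZeta_natCast_eq_ofReal_tsum {m : ℕ} (hm : 1 < m) :
    riemannZeta m = (∑' k : ℕ, 1 / ((k : ℝ) + 1) ^ m : ℝ) := by
  have h := zeta_eq_tsum_one_div_nat_add_one_cpow (s := m) (by simpa using hm)
  simp only [Complex.cpow_natCast] at h
  rw [h]
  push_cast
  rfl

theorem hasSum_neg_one_pow_div_centralBinom_pow_five :
    HasSum (fun n : ℕ => (-1) ^ n * (205 * n ^ 2 + 250 * n + 77) /
        ((n + 1) * (n + 1).centralBinom : ℝ) ^ 5) (2 * ∑' k : ℕ, 1 / ((k : ℝ) + 1) ^ 3) := by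
  have hu : Summable fun m : ℕ => 3 / ((m : ℝ) + 1) ^ 2 := by
    simpa [div_eq_mul_inv] using
      ((summable_nat_add_iff 1).2 (Real.summable_nat_pow_inv.2 one_lt_two)).mul_left 3
  have h := isWZPair_wzF_wzG.hasSum_of_norm_le hu abs_wzF_le abs_wzG_le
  simpa only [wzG_zero_right, wzF_zero_left, tsum_mul_left] using h

lemma risingFactorial_one_div_risingFactorial_half (n : ℕ) :
    risingFactorial 1 n / risingFactorial (1 / 2) n = 4 ^ n / n.centralBinom := by
  rw [risingFactorial, risingFactorial, ← Finset.prod_div_distrib]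
  induction n with
  | zero => simp
  | succ n ih =>
    have hC : ((n + 1) * (n + 1).centralBinom : ℝ) = 2 * (2 * n + 1) * n.centralBinom := by
      exact_mod_cast Nat.succ_mul_centralBinom_succ n
    have h₀ : (n.centralBinom : ℝ) ≠ 0 := by exact_mod_cast n.centralBinom_ne_zero
    have h₁ : ((n + 1).centralBinom : ℝ) ≠ 0 := by exact_mod_cast (n + 1).centralBinom_ne_zero
    rw [Finset.prod_range_succ, ih]
    field_simp
    linear_combination 2 * 4 ^ n * hC

lemma summand_eq_neg_div_centralBinom_pow_five (n : ℕ) :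
    (-1 / 2 ^ 10 : ℝ) ^ (n + 1) * (risingFactorial 1 (n + 1)) ^ 5 /
        (risingFactorial (1 / 2) (n + 1)) ^ 5 *
        (205 * ((n : ℝ) + 1) ^ 2 - 160 * ((n : ℝ) + 1) + 32) / ((n : ℝ) + 1) ^ 5
      = -((-1) ^ n * (205 * n ^ 2 + 250 * n + 77) / ((n + 1) * (n + 1).centralBinom) ^ 5) := by
  have hpow : (-1 / 2 ^ 10 : ℝ) ^ (n + 1) * (4 ^ (n + 1)) ^ 5 = -(-1) ^ n := by
    rw [← pow_mul', pow_mul, ← mul_pow]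
    norm_num [pow_succ]
  rw [mul_div_assoc (_ ^ (n + 1)), ← div_pow (risingFactorial _ _),
    risingFactorial_one_div_risingFactorial_half, div_pow (4 ^ _), mul_div, hpow]
  field_simp
  ring

end AperyZetaThree

open AperyZetaThree

/-- `∑_{n≥1} (−1/2^10)^n (1)ₙ^5/(1/2)ₙ^5 (205n²−160n+32)/n^5 = −2ζ(3)`. -/
theorem apery_zeta3_series :
    ∑' n : ℕ, ((((-1 / 2 ^ 10 : ℝ) ^ (n + 1) * (risingFactorial 1 (n + 1)) ^ 5 /
        (risingFactorial (1 / 2) (n + 1)) ^ 5 *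
        (205 * ((n : ℝ) + 1) ^ 2 - 160 * ((n : ℝ) + 1) + 32) / ((n : ℝ) + 1) ^ 5 : ℝ)) : ℂ)
      = -2 * riemannZeta 3 := by
  have hzeta : riemannZeta 3 = (∑' k : ℕ, 1 / ((k : ℝ) + 1) ^ 3 : ℝ) :=
    riemannZeta_natCast_eq_ofReal_tsum (m := 3) (by norm_num)
  rw [← Complex.ofReal_tsum, tsum_congr summand_eq_neg_div_centralBinom_pow_five,
    hasSum_neg_one_pow_div_centralBinom_pow_five.neg.tsum_eq, hzeta]
  push_cast
  ring
end

section
/- The series identity ∑_{n≥1} (−2^10/5^5)^n · ((1)_n)^9 / ( ((1/2)_n)^5 (1/5)_n (2/5)_n (3/5)_n (4/5)_n ) · (30 − 425n + 2275n² − 5600n³ + 5532n⁴)/n^9 = −380928 ζ(5) holds, where ζ is the Riemann zeta function. -/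
/-!
There is a WZ pair `F (n + 1, ν) - F (n, ν) = G (n, ν + 1/2) - G (n, ν - 1/2)` with
`F (0, ν) = -2048 / ν³`, whose mate has the form `G (n, μ) = μ² σₙ μ / (1/4 - μ²)³`, the `n`-th
summand of the series being `64 σₙ 0`. Summing `G (k, μ)` over `k < n` and adding inverse cubes that
cancel the pole of `F (0, ν)` gives an even function `fₙ` with
`fₙ (1/2 + ν) - fₙ (1/2 - ν) = F (n, ν) + O (1/n)` on the imaginary axis, where `F (n, ν)` decays
geometrically in `n`.

A contour integral takes the place of Carlson's theorem. In the strip `|re μ| ≤ 1/2` the function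
`fₙ μ * cot (π μ) ^ 3` has only a simple pole, at the origin, and `cot (π μ) = -i tanh (π im μ)` on
both edges of the strip; so the residue at the origin is, up to a multiple of the value of `fₙ` at
infinity, an integral of the small jumps. The value at infinity can be read off along the integers,
where the sum of the `G (k, μ)` telescopes over the half-integers and tends to `2048 ∑ 1/(m+1/2)³`
up to an error that vanishes as `n` grows; the inverse cubes contribute `-2048 ∑_{m<n} 1/(m+1/2)³`.
Hence the residues tend to zero. Up to a constant factor they are the partial sums of the series
plus those of `12288 ∑ 1/(m+1/2)⁵ = 380928 ζ(5)`.
-/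

open Bornology (cobounded)
open Filter Topology Complex
open Finset (range)
open scoped Real
open Complex.HadamardThreeLines (verticalClosedStrip)

section StripIntegral

theorem odd_dslope_zero_of_even {𝕜 E : Type*} [NontriviallyNormedField 𝕜] [CharZero 𝕜]
    [NormedAddCommGroup E] [NormedSpace 𝕜 E] {f : 𝕜 → E} (hf : f.Even) :
    (dslope f 0).Odd := by
  intro x
  rcases eq_or_ne x 0 with rfl | hx
  · have h := deriv_comp_neg f 0
    simp only [hf.eq, neg_zero] at h
    rw [neg_zero, dslope_same, ← h]
  · rw [dslope_of_ne _ hx, dslope_of_ne _ (neg_ne_zero.2 hx), slope, slope, hf x]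
    simp [inv_neg]

theorem integral_neg_to_self_eq_zero_of_odd {E : Type*} [NormedAddCommGroup E] [NormedSpace ℝ E]
    {f : ℝ → E} (hf : f.Odd) (a : ℝ) : ∫ x in -a..a, f x = 0 := by
  have h := intervalIntegral.integral_comp_neg (a := -a) (b := a) f
  simp only [hf.eq, neg_neg, intervalIntegral.integral_neg] at h
  have : IsAddTorsionFree E := .of_isTorsionFree ℝ E
  exact self_eq_neg.1 h.symm

variable {a : ℝ}

theorem continuous_comp_add_mul_I {q : ℂ → ℂ} (hq : ContinuousOn q (verticalClosedStrip (-a) a))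
    {s : ℝ} (hs : s ∈ Set.Icc (-a) a) : Continuous fun y : ℝ => q (s + y * I) :=
  hq.comp_continuous (by fun_prop) fun y => by
    simpa [verticalClosedStrip] using hs

theorem integral_vertical_add_eq_integral_horizontal {q : ℂ → ℂ} (ha : 0 ≤ a)
    (hq : DifferentiableOn ℂ q (verticalClosedStrip (-a) a)) (hodd : q.Odd) (Y : ℝ) :
    ∫ y in (0 : ℝ)..Y, (q (a + y * I) + q (a - y * I)) = -I * ∫ x in -a..a, q (x + Y * I) := by
  have hrect := integral_boundary_rect_eq_zero_of_differentiableOn q (-a : ℝ) (a + Y * I)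
    (hq.mono fun μ hμ => by
      simpa [verticalClosedStrip, Set.uIcc_of_le (neg_le_self ha)] using hμ.1)
  have hbottom : ∫ x in -a..a, q x = 0 :=
    integral_neg_to_self_eq_zero_of_odd (f := fun x : ℝ => q x)
      (fun x => by simpa using hodd x) a
  have hleft : ∀ y : ℝ, q (a - y * I) = -q ((-a : ℝ) + y * I) := fun y => by
    rw [← hodd]; congr 1; push_cast; ring
  have hcR := continuous_comp_add_mul_I hq.continuousOn (Set.right_mem_Icc.2 (neg_le_self ha))
  have hcL := continuous_comp_add_mul_I hq.continuousOn (Set.left_mem_Icc.2 (neg_le_self ha))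
  simp only [hleft, ← sub_eq_add_neg]
  rw [intervalIntegral.integral_sub (hcR.intervalIntegrable _ _) (hcL.intervalIntegrable _ _)]
  simp only [ofReal_re, ofReal_im, add_re, add_im, mul_re, mul_im, I_re, I_im, ofReal_zero,
    mul_zero, mul_one, zero_mul, add_zero, zero_add, sub_zero, hbottom, zero_sub,
    smul_eq_mul] at hrect
  linear_combination -I * hrect + ((∫ y in (0 : ℝ)..Y, q (a + y * I)) -
    ∫ y in (0 : ℝ)..Y, q ((-a : ℝ) + y * I)) * I_sq

theorem tendsto_integral_horizontal {q : ℂ → ℂ} {L : ℂ} (ha : 0 ≤ a)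
    (hq : ContinuousOn q (verticalClosedStrip (-a) a))
    (hlim : Tendsto q (comap im atTop) (𝓝 L)) :
    Tendsto (fun Y : ℝ => ∫ x in -a..a, q (x + Y * I)) atTop (𝓝 (2 * a * L)) := by
  have hL : ∫ _ in -a..a, L = 2 * a * L := by
    rw [intervalIntegral.integral_const, real_smul]; push_cast; ring
  have hline : ∀ x : ℝ, Tendsto (fun Y : ℝ => (x + Y * I : ℂ)) atTop (comap im atTop) := fun x =>
    tendsto_comap_iff.2 (by simpa [Function.comp_def] using! tendsto_id)
  have hbdd : ∀ᶠ Y : ℝ in atTop, ∀ x : ℝ, ‖q (x + Y * I)‖ ≤ ‖L‖ + 1 := by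
    have h := hlim.norm.eventually_le_const (lt_add_one ‖L‖)
    exact (eventually_comap.1 h).mono fun Y hY x => hY _ (by simp)
  rw [← hL]
  refine intervalIntegral.tendsto_integral_filter_of_dominated_convergence (fun _ => ‖L‖ + 1)
    (Eventually.of_forall fun Y => ?_) (hbdd.mono fun Y hY => .of_forall fun x _ => hY x)
    intervalIntegrable_const (.of_forall fun x _ => hlim.comp (hline x))
  refine ContinuousOn.aestronglyMeasurable (hq.comp (by fun_prop) fun x hx => ?_)
    measurableSet_uIoc
  rw [Set.uIoc_of_le (neg_le_self ha)] at hx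
  simpa [verticalClosedStrip] using Set.Ioc_subset_Icc_self hx

theorem tendsto_integral_two_mul_div_sq_add_sq (ha : 0 < a) :
    Tendsto (fun Y : ℝ => ∫ y in (0 : ℝ)..Y, 2 * a / (a ^ 2 + y ^ 2)) atTop (𝓝 π) := by
  have harctan : Tendsto (fun Y : ℝ => 2 * Real.arctan (Y / a)) atTop (𝓝 (2 * (π / 2))) :=
    ((Real.tendsto_arctan_atTop.mono_right nhdsWithin_le_nhds).comp
      (tendsto_id.atTop_div_const ha)).const_mul 2
  rw [mul_div_cancel₀ π two_ne_zero] at harctan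
  refine harctan.congr fun Y => ?_
  simp only [div_eq_mul_inv (2 * a), intervalIntegral.integral_const_mul,
    integral_inv_sq_add_sq ha.ne', zero_div, Real.arctan_zero, sub_zero]
  field_simp

theorem inv_add_mul_I_add_inv_sub_mul_I (ha : a ≠ 0) (y : ℝ) :
    (a + y * I : ℂ)⁻¹ + (a - y * I : ℂ)⁻¹ = (2 * a / (a ^ 2 + y ^ 2) : ℝ) := by
  have h₁ : (a + y * I : ℂ) ≠ 0 := ne_of_apply_ne re (by simpa using ha)
  have h₂ : (a - y * I : ℂ) ≠ 0 := ne_of_apply_ne re (by simpa using ha)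
  have hprod : (a ^ 2 + y ^ 2 : ℂ) = (a + y * I) * (a - y * I) := by
    linear_combination (y : ℂ) ^ 2 * I_sq
  push_cast
  rw [hprod]
  field_simp
  ring

theorem comap_im_atTop_le_cobounded : comap im atTop ≤ cobounded ℂ :=
  tendsto_id'.1 (tendsto_norm_atTop_iff_cobounded.1
    (tendsto_atTop_mono im_le_norm tendsto_comap))

theorem div_eq_dslope_zero_add (ψ : ℂ → ℂ) {μ : ℂ} (hμ : μ ≠ 0) :
    ψ μ / μ = dslope ψ 0 μ + ψ 0 * μ⁻¹ := by
  rw [dslope_of_ne ψ hμ, slope_def_field]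
  ring

theorem tendsto_dslope_zero_cobounded {ψ : ℂ → ℂ} {L : ℂ} {l : Filter ℂ}
    (hl : l ≤ cobounded ℂ) (hlim : Tendsto (fun μ => ψ μ / μ) l (𝓝 L)) :
    Tendsto (dslope ψ 0) l (𝓝 L) := by
  have hinv : Tendsto (fun μ : ℂ => ψ 0 * μ⁻¹) l (𝓝 (ψ 0 * 0)) :=
    (tendsto_inv₀_cobounded.mono_left hl).const_mul _
  have h := hlim.sub hinv
  rw [mul_zero, sub_zero] at h
  refine h.congr' ?_
  filter_upwards [hl (Bornology.eventually_ne_cobounded 0)] with μ hμ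
  rw [div_eq_dslope_zero_add ψ hμ, add_sub_cancel_right]

/-- The residue theorem for `ψ μ / μ` on the strip, folded onto its upper half by the symmetry. -/
theorem tendsto_integral_strip {ψ : ℂ → ℂ} {L : ℂ} (ha : 0 < a)
    (hψ : DifferentiableOn ℂ ψ (verticalClosedStrip (-a) a)) (heven : ψ.Even)
    (hlim : Tendsto (fun μ => ψ μ / μ) (comap im atTop) (𝓝 L)) :
    Tendsto (fun Y : ℝ => ∫ y in (0 : ℝ)..Y,
        (ψ (a + y * I) / (a + y * I) + ψ (a - y * I) / (a - y * I)))
      atTop (𝓝 (π * ψ 0 - 2 * a * I * L)) := by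
  set q : ℂ → ℂ := dslope ψ 0
  have hnhds : verticalClosedStrip (-a) a ∈ 𝓝 (0 : ℂ) :=
    continuous_re.continuousAt.preimage_mem_nhds (Icc_mem_nhds (neg_lt_zero.2 ha) ha)
  have hq : DifferentiableOn ℂ q (verticalClosedStrip (-a) a) :=
    (differentiableOn_dslope hnhds).2 hψ
  have hq_odd : q.Odd := odd_dslope_zero_of_even heven
  have hq_lim : Tendsto q (comap im atTop) (𝓝 L) :=
    tendsto_dslope_zero_cobounded comap_im_atTop_le_cobounded hlim
  have hintegrand : ∀ y : ℝ,
      ψ (a + y * I) / (a + y * I) + ψ (a - y * I) / (a - y * I) =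
        q (a + y * I) + q (a - y * I) + ψ 0 * ((2 * a / (a ^ 2 + y ^ 2) : ℝ) : ℂ) := fun y => by
    rw [div_eq_dslope_zero_add ψ (ne_of_apply_ne re (by simpa using ha.ne')),
      div_eq_dslope_zero_add ψ (ne_of_apply_ne re (by simpa using ha.ne')),
      ← inv_add_mul_I_add_inv_sub_mul_I ha.ne']
    ring
  have hc₁ := continuous_comp_add_mul_I hq.continuousOn (Set.right_mem_Icc.2 (neg_le_self ha.le))
  have hc₂ : Continuous fun y : ℝ => q (a - y * I) := by
    simpa [Function.comp_def, ← sub_eq_add_neg] using! hc₁.comp continuous_neg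
  have hc₃ : Continuous fun y : ℝ => ψ 0 * ((2 * a / (a ^ 2 + y ^ 2) : ℝ) : ℂ) := by
    have : ∀ y : ℝ, a ^ 2 + y ^ 2 ≠ 0 := fun y => by positivity
    fun_prop (disch := assumption)
  have hlim_sum := ((tendsto_integral_horizontal ha.le hq.continuousOn hq_lim).const_mul (-I)).add
    ((tendsto_integral_two_mul_div_sq_add_sq ha).ofReal.const_mul (ψ 0))
  rw [show π * ψ 0 - 2 * a * I * L = -I * (2 * a * L) + ψ 0 * π by ring]
  refine hlim_sum.congr fun Y => ?_
  simp only [hintegrand]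
  rw [intervalIntegral.integral_add ((hc₁.fun_add hc₂).intervalIntegrable _ _)
    (hc₃.intervalIntegrable _ _), integral_vertical_add_eq_integral_horizontal ha.le hq hq_odd,
    intervalIntegral.integral_const_mul, intervalIntegral.integral_ofReal]

theorem norm_strip_le {ψ : ℂ → ℂ} {L : ℂ} {ε : ℝ} (ha : 0 < a)
    (hψ : DifferentiableOn ℂ ψ (verticalClosedStrip (-a) a)) (heven : ψ.Even)
    (hlim : Tendsto (fun μ => ψ μ / μ) (comap im atTop) (𝓝 L))
    (hbound : ∀ y : ℝ, 0 < y →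
      ‖ψ (a + y * I) / (a + y * I) + ψ (a - y * I) / (a - y * I)‖ ≤ ε / (1 + y ^ 2)) :
    ‖π * ψ 0 - 2 * a * I * L‖ ≤ ε * (π / 2) := by
  have harctan : Tendsto (fun Y : ℝ => ε * Real.arctan Y) atTop (𝓝 (ε * (π / 2))) :=
    (Real.tendsto_arctan_atTop.mono_right nhdsWithin_le_nhds).const_mul ε
  refine le_of_tendsto_of_tendsto (tendsto_integral_strip ha hψ heven hlim).norm harctan ?_
  filter_upwards [eventually_ge_atTop 0] with Y hY
  have hint : ∫ y in (0 : ℝ)..Y, ε / (1 + y ^ 2) = ε * Real.arctan Y := by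
    simp only [div_eq_mul_inv, intervalIntegral.integral_const_mul, integral_inv_one_add_sq,
      Real.arctan_zero, sub_zero]
  rw [← hint]
  refine intervalIntegral.norm_integral_le_of_norm_le hY
    (.of_forall fun y hy => hbound y hy.1) (Continuous.intervalIntegrable ?_ _ _)
  have : ∀ y : ℝ, 1 + y ^ 2 ≠ 0 := fun y => by positivity
  fun_prop (disch := assumption)

end StripIntegral

section CotKernel

/-- The continuation of `μ cot (π μ) / (1/4 - μ²)` that is holomorphic in the strip `|re μ| < 1`. -/
noncomputable def cotKernel (μ : ℂ) : ℂ :=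
  Gamma (1 + μ) * Gamma (1 - μ) * ((Gamma (3 / 2 + μ))⁻¹ * (Gamma (3 / 2 - μ))⁻¹)

theorem cotKernel_even : cotKernel.Even := fun μ => by
  simp only [cotKernel, sub_neg_eq_add, ← sub_eq_add_neg]
  ring

theorem differentiableAt_Gamma_of_re_pos {s : ℂ} (hs : 0 < s.re) : DifferentiableAt ℂ Gamma s :=
  differentiableAt_Gamma s fun m hm => by
    rw [hm, neg_re, natCast_re] at hs
    linarith [m.cast_nonneg (α := ℝ)]

theorem differentiableAt_cotKernel {μ : ℂ} (hμ : |μ.re| < 1) : DifferentiableAt ℂ cotKernel μ := by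
  obtain ⟨hl, hr⟩ := abs_lt.1 hμ
  have h₁ : DifferentiableAt ℂ (fun μ => Gamma (1 + μ)) μ :=
    (differentiableAt_Gamma_of_re_pos (by simpa using by linarith)).comp μ (by fun_prop)
  have h₂ : DifferentiableAt ℂ (fun μ => Gamma (1 - μ)) μ :=
    (differentiableAt_Gamma_of_re_pos (by simpa using hr)).comp μ (by fun_prop)
  have h₃ : DifferentiableAt ℂ (fun μ => (Gamma (3 / 2 + μ))⁻¹) μ :=
    (differentiable_one_div_Gamma (3 / 2 + μ)).comp μ (by fun_prop)
  have h₄ : DifferentiableAt ℂ (fun μ => (Gamma (3 / 2 - μ))⁻¹) μ :=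
    (differentiable_one_div_Gamma (3 / 2 - μ)).comp μ (by fun_prop)
  exact (h₁.mul h₂).mul (h₃.mul h₄)

theorem cotKernel_zero : cotKernel 0 = 4 / π := by
  have hhalf : Gamma (1 / 2) * Gamma (1 / 2) = π := by
    have h := Gamma_mul_Gamma_one_sub (1 / 2)
    rwa [sub_half, mul_one_div, sin_pi_div_two, div_one] at h
  have hthree : Gamma (3 / 2) = 1 / 2 * Gamma (1 / 2) := by
    rw [← Gamma_add_one _ (by norm_num)]
    norm_num
  simp only [cotKernel, add_zero, sub_zero, Gamma_one, one_mul]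
  rw [← mul_inv, hthree, mul_mul_mul_comm, hhalf]
  field_simp
  norm_num

theorem quarter_sub_sq_ne_zero {μ : ℂ} (hμ : μ.im ≠ 0) : 1 / 4 - μ ^ 2 ≠ 0 := by
  rw [show 1 / 4 - μ ^ 2 = (1 / 2 + μ) * (1 / 2 - μ) by ring]
  exact mul_ne_zero (ne_of_apply_ne im (by simpa using hμ)) (ne_of_apply_ne im (by simpa using hμ))

theorem cotKernel_eq {μ : ℂ} (hμ : μ.im ≠ 0) :
    cotKernel μ = μ * cot (π * μ) / (1 / 4 - μ ^ 2) := by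
  have h₀ : μ ≠ 0 := ne_of_apply_ne im hμ
  have h₁ : 1 / 2 + μ ≠ 0 := ne_of_apply_ne im (by simpa using hμ)
  have h₂ : 1 / 2 - μ ≠ 0 := ne_of_apply_ne im (by simpa using hμ)
  have hnum : Gamma (1 + μ) * Gamma (1 - μ) = μ * (π / sin (π * μ)) := by
    rw [← Gamma_mul_Gamma_one_sub, add_comm, Gamma_add_one _ h₀, mul_assoc]
  have hden : Gamma (3 / 2 + μ) * Gamma (3 / 2 - μ) = (1 / 4 - μ ^ 2) * (π / cos (π * μ)) := by
    have h := Gamma_mul_Gamma_one_sub (1 / 2 + μ)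
    rw [show (π : ℂ) * (1 / 2 + μ) = π * μ + π / 2 by ring, sin_add_pi_div_two,
      show 1 - (1 / 2 + μ) = 1 / 2 - μ by ring] at h
    rw [← h, show 3 / 2 + μ = 1 / 2 + μ + 1 by ring, show 3 / 2 - μ = 1 / 2 - μ + 1 by ring,
      Gamma_add_one _ h₁, Gamma_add_one _ h₂]
    ring
  have hpi : (π : ℂ) ≠ 0 := ofReal_ne_zero.2 Real.pi_ne_zero
  rw [cotKernel, ← mul_inv, hnum, hden, cot_eq_cos_div_sin, mul_inv, inv_div]
  calc μ * (π / sin (π * μ)) * ((1 / 4 - μ ^ 2)⁻¹ * (cos (π * μ) / π))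
      = μ * (cos (π * μ) / sin (π * μ)) / (1 / 4 - μ ^ 2) * (π / π) := by ring
    _ = μ * (cos (π * μ) / sin (π * μ)) / (1 / 4 - μ ^ 2) := by rw [div_self hpi, mul_one]

theorem cot_pi_mul_half_add_mul_I (y : ℝ) :
    cot (π * (1 / 2 + y * I)) = -I * (Real.tanh (π * y) : ℝ) := by
  rw [cot_eq_cos_div_sin, show (π : ℂ) * (1 / 2 + y * I) = π * y * I + π / 2 by ring,
    cos_add_pi_div_two, sin_add_pi_div_two, neg_div, ← tan_eq_sin_div_cos, tan_mul_I]
  push_cast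
  ring

theorem tendsto_cot_pi_mul : Tendsto (fun μ : ℂ => cot (π * μ)) (comap im atTop) (𝓝 (-I)) := by
  have hexp : Tendsto (fun μ : ℂ => exp (2 * I * (π * μ))) (comap im atTop) (𝓝 0) := by
    have hre : ∀ μ : ℂ, (2 * I * (π * μ)).re = -(2 * π) * μ.im := fun μ => by simp; ring
    simp only [tendsto_exp_nhds_zero_iff, hre]
    exact tendsto_comap.const_mul_atTop_of_neg (by linarith [Real.pi_pos])
  simpa [cot_eq_exp_ratio] using!
    (hexp.add_const 1).div ((hexp.const_sub 1).const_mul I) (by simp)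

theorem tanh_nonneg {x : ℝ} (hx : 0 ≤ x) : 0 ≤ Real.tanh x := by
  rw [Real.tanh_eq_sinh_div_cosh]
  exact div_nonneg (Real.sinh_nonneg_iff.2 hx) (Real.cosh_pos x).le

theorem tanh_le_self {x : ℝ} (hx : 0 ≤ x) : Real.tanh x ≤ x := by
  have hderiv : ∀ t : ℝ, HasDerivAt (fun t => t * Real.cosh t - Real.sinh t)
      (t * Real.sinh t) t := fun t => by
    simpa using!
      ((hasDerivAt_id' t).fun_mul (Real.hasDerivAt_cosh t)).fun_sub (Real.hasDerivAt_sinh t)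
  have hmono : MonotoneOn (fun t => t * Real.cosh t - Real.sinh t) (Set.Ici 0) := by
    refine monotoneOn_of_hasDerivWithinAt_nonneg (convex_Ici 0)
      (fun t _ => (hderiv t).continuousAt.continuousWithinAt)
      (fun t _ => (hderiv t).hasDerivWithinAt) fun t ht => ?_
    rw [interior_Ici, Set.mem_Ioi] at ht
    exact mul_nonneg ht.le (Real.sinh_nonneg_iff.2 ht.le)
  have h := hmono Set.self_mem_Ici hx hx
  simp only [zero_mul, Real.sinh_zero, sub_zero] at h
  rw [Real.tanh_eq_sinh_div_cosh, div_le_iff₀ (Real.cosh_pos x)]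
  linarith

theorem tanh_pi_mul_cube_div_cube_le {y : ℝ} (hy : 0 < y) :
    Real.tanh (π * y) ^ 3 / y ^ 3 ≤ 128 / (1 + y ^ 2) := by
  have hπy : 0 ≤ π * y := by positivity
  have h₀ := tanh_nonneg hπy
  have h₁ : Real.tanh (π * y) ≤ 4 * y :=
    (tanh_le_self hπy).trans (by gcongr; exact Real.pi_le_four)
  rw [div_le_div_iff₀ (by positivity) (by positivity)]
  rcases le_total y 1 with h | h
  · calc Real.tanh (π * y) ^ 3 * (1 + y ^ 2)
        ≤ (4 * y) ^ 3 * (1 + 1 ^ 2) := by gcongr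
      _ = 128 * y ^ 3 := by ring
  · calc Real.tanh (π * y) ^ 3 * (1 + y ^ 2)
        ≤ 1 ^ 3 * (y ^ 3 + y ^ 3) := by
          gcongr
          · exact (Real.tanh_lt_one _).le
          · exact one_le_pow₀ h
          · norm_num
      _ ≤ 128 * y ^ 3 := by linarith [pow_pos hy 3]

end CotKernel

section StripCore

/-- `f μ = μ² σ μ / (1/4 - μ²)³` off the real axis, where `σ` is even and holomorphic in the closed
strip `|re μ| ≤ 1/2`. The poles of `f` at `±1/2` are then cancelled by the zeros of `cot (π μ) ^ 3`,
so that `f μ * cot (π μ) ^ 3` has at most a simple pole in the strip, at the origin. -/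
structure IsStripCore (f σ : ℂ → ℂ) : Prop where
  differentiableOn : DifferentiableOn ℂ σ (verticalClosedStrip (-(1 / 2)) (1 / 2))
  even : σ.Even
  eq_div : ∀ μ : ℂ, μ.im ≠ 0 → f μ = μ ^ 2 * σ μ / (1 / 4 - μ ^ 2) ^ 3

theorem IsStripCore.add {f g σ τ : ℂ → ℂ} (hf : IsStripCore f σ) (hg : IsStripCore g τ) :
    IsStripCore (fun μ => f μ + g μ) fun μ => σ μ + τ μ where
  differentiableOn := hf.differentiableOn.add hg.differentiableOn
  even μ := congrArg₂ (· + ·) (hf.even μ) (hg.even μ)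
  eq_div μ hμ := by rw [hf.eq_div μ hμ, hg.eq_div μ hμ]; ring

theorem IsStripCore.sum {ι : Type*} {f σ : ι → ℂ → ℂ} (s : Finset ι)
    (h : ∀ i ∈ s, IsStripCore (f i) (σ i)) :
    IsStripCore (fun μ => ∑ i ∈ s, f i μ) fun μ => ∑ i ∈ s, σ i μ where
  differentiableOn := DifferentiableOn.fun_sum fun i hi => (h i hi).differentiableOn
  even μ := Finset.sum_congr rfl fun i hi => (h i hi).even μ
  eq_div μ hμ := by
    rw [Finset.mul_sum, Finset.sum_div]
    exact Finset.sum_congr rfl fun i hi => (h i hi).eq_div μ hμ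

theorem abs_re_lt_one_of_mem_strip {μ : ℂ} (hμ : μ ∈ verticalClosedStrip (-(1 / 2)) (1 / 2)) :
    |μ.re| < 1 :=
  (abs_le.2 hμ).trans_lt one_half_lt_one

theorem IsStripCore.mul_cotKernel_pow_div {f σ : ℂ → ℂ} (h : IsStripCore f σ) {μ : ℂ}
    (hμ : μ.im ≠ 0) : σ μ * cotKernel μ ^ 3 / μ = f μ * cot (π * μ) ^ 3 := by
  have h₀ : μ ≠ 0 := ne_of_apply_ne im hμ
  rw [h.eq_div μ hμ, cotKernel_eq hμ]
  field_simp [quarter_sub_sq_ne_zero hμ]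

theorem IsStripCore.norm_le {f σ : ℂ → ℂ} {l : ℂ} {ε : ℝ} (h : IsStripCore f σ)
    (hlim : Tendsto f (comap im atTop) (𝓝 l))
    (hjump : ∀ y : ℝ, 0 < y →
      ‖f (1 / 2 + y * I) - f (1 / 2 - y * I)‖ * Real.tanh (π * y) ^ 3 ≤ ε / (1 + y ^ 2)) :
    ‖64 * σ 0 / π ^ 2 + l‖ ≤ ε * (π / 2) := by
  have hψ : DifferentiableOn ℂ (fun μ => σ μ * cotKernel μ ^ 3)
      (verticalClosedStrip (-(1 / 2)) (1 / 2)) := h.differentiableOn.mul fun μ hμ =>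
    ((differentiableAt_cotKernel (abs_re_lt_one_of_mem_strip hμ)).pow 3).differentiableWithinAt
  have heven : (fun μ => σ μ * cotKernel μ ^ 3).Even := fun μ => by
    simp only [h.even μ, cotKernel_even μ]
  have hψ_lim : Tendsto (fun μ => σ μ * cotKernel μ ^ 3 / μ) (comap im atTop) (𝓝 (I * l)) := by
    rw [show I * l = l * (-I) ^ 3 by rw [Odd.neg_pow (by decide), I_pow_three]; ring]
    refine (hlim.mul (tendsto_cot_pi_mul.pow 3)).congr' ?_
    filter_upwards [tendsto_comap.eventually_gt_atTop 0] with μ hμ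
    rw [h.mul_cotKernel_pow_div hμ.ne']
  have hbound : ∀ y : ℝ, 0 < y →
      ‖σ ((1 / 2 : ℝ) + y * I) * cotKernel ((1 / 2 : ℝ) + y * I) ^ 3 / ((1 / 2 : ℝ) + y * I) +
        σ ((1 / 2 : ℝ) - y * I) * cotKernel ((1 / 2 : ℝ) - y * I) ^ 3 / ((1 / 2 : ℝ) - y * I)‖ ≤
      ε / (1 + y ^ 2) := fun y hy => by
    have hcot : cot (π * (1 / 2 - y * I)) = I * (Real.tanh (π * y) : ℝ) := by
      simpa [sub_eq_add_neg] using cot_pi_mul_half_add_mul_I (-y)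
    have hhalf : ((1 / 2 : ℝ) : ℂ) = 1 / 2 := by norm_num
    refine le_trans (le_of_eq ?_) (hjump y hy)
    rw [hhalf, h.mul_cotKernel_pow_div (by simpa using hy.ne'),
      h.mul_cotKernel_pow_div (by simpa using hy.ne'), cot_pi_mul_half_add_mul_I, hcot,
      show ∀ u v t : ℂ, u * (-I * t) ^ 3 + v * (I * t) ^ 3 = -I ^ 3 * ((u - v) * t ^ 3) from
        fun u v t => by ring, I_pow_three, neg_neg, norm_mul, norm_I, one_mul, norm_mul, norm_pow,
      norm_real, Real.norm_of_nonneg (tanh_nonneg (by positivity))]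
  have key := norm_strip_le (by norm_num) hψ heven hψ_lim hbound
  have hpi : (π : ℂ) ≠ 0 := ofReal_ne_zero.2 Real.pi_ne_zero
  convert key using 2
  rw [cotKernel_zero]
  push_cast
  field_simp
  linear_combination l * (π : ℂ) ^ 2 * I_sq

end StripCore

section WZPair

theorem risingFactorial_succ (a : ℝ) (n : ℕ) :
    risingFactorial a (n + 1) = risingFactorial a n * (a + n) :=
  Finset.prod_range_succ _ n

theorem risingFactorial_pos {a : ℝ} (ha : 0 < a) (n : ℕ) : 0 < risingFactorial a n :=
  Finset.prod_pos fun _ _ => by positivity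

/-- The part of the WZ summand `wzF n ν` that does not depend on `ν`, up to a constant. -/
noncomputable def wzCoeff (n : ℕ) : ℝ :=
  (-2 ^ 6 / 5 ^ 5) ^ n * risingFactorial 1 n ^ 5 /
    (risingFactorial (1 / 2) n * risingFactorial (1 / 5) n * risingFactorial (2 / 5) n *
      risingFactorial (3 / 5) n * risingFactorial (4 / 5) n)

theorem wzCoeff_succ (n : ℕ) :
    wzCoeff (n + 1) * (5 * (2 * n + 1) * (5 * n + 1) * (5 * n + 2) * (5 * n + 3) * (5 * n + 4)) =
      -(wzCoeff n * (128 * (n + 1) ^ 5)) := by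
  have h₁ := risingFactorial_pos (a := 1 / 2) (by norm_num) n
  have h₂ := risingFactorial_pos (a := 1 / 5) (by norm_num) n
  have h₃ := risingFactorial_pos (a := 2 / 5) (by norm_num) n
  have h₄ := risingFactorial_pos (a := 3 / 5) (by norm_num) n
  have h₅ := risingFactorial_pos (a := 4 / 5) (by norm_num) n
  simp only [wzCoeff, risingFactorial_succ, pow_succ (-2 ^ 6 / 5 ^ 5 : ℝ)]
  field_simp
  ring

/-- The ratio of consecutive `ν`-dependent factors of the WZ summand `wzF`. -/
noncomputable def wzFactor (k : ℕ) (ν : ℂ) : ℂ :=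
  (k ^ 2 - 4 * ν ^ 2) * ((2 * k + 1 / 2) ^ 2 - ν ^ 2) * ((2 * k + 3 / 2) ^ 2 - ν ^ 2) /
    ((k + 1) ^ 2 - ν ^ 2) ^ 3

/-- The first member `F` of the WZ pair `(F, G)`. -/
noncomputable def wzF (n : ℕ) (ν : ℂ) : ℂ :=
  -2048 * wzCoeff n * (∏ k ∈ range n, wzFactor k ν) / ν ^ 3

/-- The ratio of consecutive `μ`-dependent factors of the WZ mate `wzG`. -/
noncomputable def mateFactor (k : ℕ) (μ : ℂ) : ℂ :=
  ((k + 1) ^ 2 - 4 * μ ^ 2) * ((2 * k + 1) ^ 2 - μ ^ 2) * ((2 * k + 2) ^ 2 - μ ^ 2) /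
    ((k + 3 / 2) ^ 2 - μ ^ 2) ^ 3

/-- The polynomial factor of the WZ mate, as a function of `N = n + 1` and `s = μ²`. -/
noncomputable def wzPoly (N s : ℂ) : ℂ :=
  (30 - 425 * N + 2275 * N ^ 2 - 5600 * N ^ 3 + 5532 * N ^ 4) * (2 * N - 1) ^ 2 +
    (-240 + 3160 * N - 15048 * N ^ 2 + 30592 * N ^ 3 - 22944 * N ^ 4) * s +
    (7728 * N ^ 2 - 3920 * N + 480) * s ^ 2

/-- The WZ mate `wzG n` without its factor `μ² / (1/4 - μ²)³`. -/
noncomputable def wzCore (n : ℕ) (μ : ℂ) : ℂ :=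
  4 * wzCoeff (n + 1) / (n + 1) ^ 5 * (∏ k ∈ range n, mateFactor k μ) * wzPoly (n + 1) (μ ^ 2)

/-- The second member `G` of the WZ pair `(F, G)`. -/
noncomputable def wzG (n : ℕ) (μ : ℂ) : ℂ :=
  μ ^ 2 * wzCore n μ / (1 / 4 - μ ^ 2) ^ 3

/-- The WZ certificate `G (n, ν - 1/2) / F (n, ν)` without its factor `wzPoly` and up to a constant
multiple of `ν³`. -/
noncomputable def wzCert (n : ℕ) (ν : ℂ) : ℂ :=
  (n - 2 * ν) * (n + 1 - 2 * ν) * (2 * n + 1 / 2 - ν) / (ν ^ 4 * (n + 1 - ν) ^ 3)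

theorem wzFactor_even (k : ℕ) : (wzFactor k).Even := fun ν => by
  simp only [wzFactor, neg_sq]

theorem wzCore_even (n : ℕ) : (wzCore n).Even := fun μ => by
  simp only [wzCore, mateFactor, neg_sq]

theorem wzG_even (n : ℕ) : (wzG n).Even := fun μ => by
  simp only [wzG, wzCore_even n μ, neg_sq]

theorem neg_mem_integerComplement {ν : ℂ} (hν : ν ∈ integerComplement) :
    -ν ∈ integerComplement := fun ⟨m, hm⟩ => hν ⟨-m, by rw [Int.cast_neg, hm, neg_neg]⟩

theorem natCast_add_ne_zero_of_mem_integerComplement {ν : ℂ} (hν : ν ∈ integerComplement) (m : ℕ) :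
    m + ν ≠ 0 := by
  simpa [add_comm] using integerComplement_add_ne_zero hν m

theorem natCast_sub_ne_zero_of_mem_integerComplement {ν : ℂ} (hν : ν ∈ integerComplement) (m : ℕ) :
    m - ν ≠ 0 := by
  simpa [sub_eq_add_neg] using
    natCast_add_ne_zero_of_mem_integerComplement (neg_mem_integerComplement hν) m

theorem wzCert_mul_mateFactor (n : ℕ) {ν : ℂ} (hν : ν ∈ integerComplement) :
    wzCert n ν * mateFactor n (ν - 1 / 2) = wzFactor n ν * wzCert (n + 1) ν := by
  have h₀ := integerComplement.ne_zero hν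
  have h₁ := natCast_sub_ne_zero_of_mem_integerComplement hν (n + 1)
  have h₂ := natCast_sub_ne_zero_of_mem_integerComplement hν (n + 2)
  have h₃ := natCast_add_ne_zero_of_mem_integerComplement hν (n + 1)
  have hmate : ((n : ℂ) + 3 / 2) ^ 2 - (ν - 1 / 2) ^ 2 = (n + 2 - ν) * (n + 1 + ν) := by ring
  have hfactor : ((n : ℂ) + 1) ^ 2 - ν ^ 2 = (n + 1 - ν) * (n + 1 + ν) := by ring
  have hsucc : (n : ℂ) + 1 + 1 - ν = n + 2 - ν := by ring
  push_cast at h₁ h₂ h₃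
  simp only [wzCert, mateFactor, wzFactor, Nat.cast_add, Nat.cast_one]
  rw [hmate, hfactor, hsucc]
  generalize (n : ℂ) + 1 - ν = A at *
  generalize (n : ℂ) + 2 - ν = B at *
  generalize (n : ℂ) + 1 + ν = C at *
  field_simp
  ring

theorem sq_mul_prod_mateFactor_div (n : ℕ) {ν : ℂ} (hν : ν ∈ integerComplement) :
    (ν - 1 / 2) ^ 2 * (∏ k ∈ range n, mateFactor k (ν - 1 / 2)) / (1 / 4 - (ν - 1 / 2) ^ 2) ^ 3 =
      -(1 / 4) * (∏ k ∈ range n, wzFactor k ν) * wzCert n ν := by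
  induction n with
  | zero =>
    have h₀ := integerComplement.ne_zero hν
    have h₁ := natCast_sub_ne_zero_of_mem_integerComplement hν 1
    have hden : 1 / 4 - (ν - 1 / 2) ^ 2 = ν * (1 - ν) := by ring
    simp only [Finset.prod_range_zero, wzCert, Nat.cast_zero, Nat.cast_one] at h₁ ⊢
    rw [hden, zero_add]
    field_simp
    ring
  | succ n ih =>
    rw [Finset.prod_range_succ, Finset.prod_range_succ]
    linear_combination mateFactor n (ν - 1 / 2) * ih -
      1 / 4 * (∏ k ∈ range n, wzFactor k ν) * wzCert_mul_mateFactor n hν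

theorem wzG_sub_half (n : ℕ) {ν : ℂ} (hν : ν ∈ integerComplement) :
    wzG n (ν - 1 / 2) = -(wzCoeff (n + 1) / (n + 1) ^ 5 * (∏ k ∈ range n, wzFactor k ν) *
      wzCert n ν * wzPoly (n + 1) ((ν - 1 / 2) ^ 2)) := by
  rw [wzG, wzCore]
  linear_combination 4 * wzCoeff (n + 1) / (n + 1) ^ 5 * wzPoly (n + 1) ((ν - 1 / 2) ^ 2) *
    sq_mul_prod_mateFactor_div n hν

theorem wzG_add_half (n : ℕ) {ν : ℂ} (hν : ν ∈ integerComplement) :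
    wzG n (ν + 1 / 2) = -(wzCoeff (n + 1) / (n + 1) ^ 5 * (∏ k ∈ range n, wzFactor k ν) *
      wzCert n (-ν) * wzPoly (n + 1) ((ν + 1 / 2) ^ 2)) := by
  have h := wzG_sub_half n (neg_mem_integerComplement hν)
  simp only [(wzFactor_even _).eq] at h
  rwa [← neg_add', neg_sq, (wzG_even n).eq] at h

theorem wzFactor_add_eq_wzCert_sub (n : ℕ) {ν : ℂ} (hν : ν ∈ integerComplement) :
    2048 / ν ^ 3 * (wzFactor n ν +
        5 * (2 * n + 1) * (5 * n + 1) * (5 * n + 2) * (5 * n + 3) * (5 * n + 4) /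
          (128 * (n + 1) ^ 5)) =
      1 / (n + 1) ^ 5 * (wzCert n (-ν) * wzPoly (n + 1) ((ν + 1 / 2) ^ 2) -
        wzCert n ν * wzPoly (n + 1) ((ν - 1 / 2) ^ 2)) := by
  have h₀ := integerComplement.ne_zero hν
  have h₁ := natCast_sub_ne_zero_of_mem_integerComplement hν (n + 1)
  have h₂ := natCast_add_ne_zero_of_mem_integerComplement hν (n + 1)
  have hN : (n : ℂ) + 1 ≠ 0 := n.cast_add_one_ne_zero
  have hfactor : ((n : ℂ) + 1) ^ 2 - ν ^ 2 = (n + 1 - ν) * (n + 1 + ν) := by ring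
  push_cast at h₁ h₂
  simp only [wzCert, wzFactor, wzPoly, neg_pow ν, sub_neg_eq_add]
  rw [hfactor]
  generalize hA : (n : ℂ) + 1 - ν = A at *
  generalize hB : (n : ℂ) + 1 + ν = B at *
  generalize hX : (n : ℂ) + 1 = N at *
  field_simp
  subst hA hB hX
  ring

theorem wzF_succ_sub (n : ℕ) {ν : ℂ} (hν : ν ∈ integerComplement) :
    wzF (n + 1) ν - wzF n ν = wzG n (ν + 1 / 2) - wzG n (ν - 1 / 2) := by
  have hN : (n : ℂ) + 1 ≠ 0 := n.cast_add_one_ne_zero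
  have hcoeff : (wzCoeff n : ℂ) = -wzCoeff (n + 1) *
      (5 * (2 * n + 1) * (5 * n + 1) * (5 * n + 2) * (5 * n + 3) * (5 * n + 4) /
        (128 * (n + 1) ^ 5)) := by
    have h := congrArg ofReal (wzCoeff_succ n)
    push_cast at h
    field_simp
    linear_combination h
  rw [wzG_add_half n hν, wzG_sub_half n hν, wzF, wzF, Finset.prod_range_succ, hcoeff]
  linear_combination -wzCoeff (n + 1) * (∏ k ∈ range n, wzFactor k ν) *
    wzFactor_add_eq_wzCert_sub n hν

theorem sum_wzG_sub (n : ℕ) {ν : ℂ} (hν : ν ∈ integerComplement) :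
    ∑ k ∈ range n, (wzG k (ν + 1 / 2) - wzG k (ν - 1 / 2)) = wzF n ν + 2048 / ν ^ 3 := by
  have hzero : wzF 0 ν = -2048 / ν ^ 3 := by simp [wzF, wzCoeff, risingFactorial]
  simp only [← wzF_succ_sub _ hν]
  rw [Finset.sum_range_sub (wzF · ν), hzero]
  ring

end WZPair

section LimitsAtInfinity

theorem tendsto_sub_sq_cobounded (c : ℂ) :
    Tendsto (fun μ : ℂ => c - μ ^ 2) (cobounded ℂ) (cobounded ℂ) := by
  rw [← tendsto_norm_atTop_iff_cobounded]
  have h : Tendsto (fun μ : ℂ => ‖μ‖ ^ 2 - ‖c‖) (cobounded ℂ) atTop :=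
    tendsto_atTop_add_const_right _ _
      ((tendsto_pow_atTop two_ne_zero).comp tendsto_norm_cobounded_atTop)
  refine tendsto_atTop_mono (fun μ => ?_) h
  rw [← norm_pow, norm_sub_rev]
  exact norm_sub_norm_le (μ ^ 2) c

theorem tendsto_inv_sub_sq_cobounded (c : ℂ) :
    Tendsto (fun μ : ℂ => (c - μ ^ 2)⁻¹) (cobounded ℂ) (𝓝 0) :=
  tendsto_inv₀_cobounded.comp (tendsto_sub_sq_cobounded c)

theorem tendsto_sub_sq_div_sub_sq_cobounded (a b c : ℂ) :
    Tendsto (fun μ : ℂ => (a - b * μ ^ 2) / (c - μ ^ 2)) (cobounded ℂ) (𝓝 b) := by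
  have h := ((tendsto_inv_sub_sq_cobounded c).const_mul (a - b * c)).const_add b
  rw [mul_zero, add_zero] at h
  refine h.congr' ?_
  filter_upwards [(tendsto_sub_sq_cobounded c).eventually_ne_cobounded 0] with μ hμ
  field_simp
  ring

theorem tendsto_mateFactor_cobounded (k : ℕ) : Tendsto (mateFactor k) (cobounded ℂ) (𝓝 4) := by
  have hratio (a b : ℂ) := tendsto_sub_sq_div_sub_sq_cobounded a b ((k + 3 / 2) ^ 2)
  have h := ((hratio ((k + 1) ^ 2) 4).mul (hratio ((2 * k + 1) ^ 2) 1)).mul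
    (hratio ((2 * k + 2) ^ 2) 1)
  rw [mul_one, mul_one] at h
  refine h.congr fun μ => ?_
  rw [mateFactor]
  generalize ((k : ℂ) + 3 / 2) ^ 2 - μ ^ 2 = d
  ring

theorem exists_tendsto_wzG_cobounded (n : ℕ) : ∃ l, Tendsto (wzG n) (cobounded ℂ) (𝓝 l) := by
  have hprod := tendsto_finsetProd (range n) fun k _ => tendsto_mateFactor_cobounded k
  have hinv := tendsto_inv_sub_sq_cobounded (1 / 4)
  have hratio := tendsto_sub_sq_div_sub_sq_cobounded 0 (-1) (1 / 4)
  set N : ℂ := n + 1 with hN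
  refine ⟨_, (((hprod.const_mul (4 * wzCoeff (n + 1) / N ^ 5)).mul hratio).mul
    ((((hinv.pow 2).const_mul
      ((30 - 425 * N + 2275 * N ^ 2 - 5600 * N ^ 3 + 5532 * N ^ 4) * (2 * N - 1) ^ 2)).add
    ((hinv.mul hratio).const_mul
      (-240 + 3160 * N - 15048 * N ^ 2 + 30592 * N ^ 3 - 22944 * N ^ 4))).add
    ((hratio.pow 2).const_mul (7728 * N ^ 2 - 3920 * N + 480)))).congr fun μ => ?_⟩
  simp only [wzG, wzCore, wzPoly, ← hN]
  generalize 1 / 4 - μ ^ 2 = d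
  ring

end LimitsAtInfinity

section ShiftTerm

/-- The summands whose jumps across the strip telescope and cancel the pole `2048 / ν ^ 3` in
`sum_wzG_sub`. The constant makes them vanish to second order at the origin. -/
noncomputable def shiftTerm (b μ : ℂ) : ℂ :=
  1024 * (1 / (b + μ) ^ 3 + 1 / (b - μ) ^ 3 - 2 / b ^ 3)

/-- The strip core of `shiftTerm (m + 1 / 2)`. For `m = 0` the poles of the shift term at `±1/2` are
those allowed by `IsStripCore`, so that no factor `1/4 - μ²` is left. -/
noncomputable def shiftCore (m : ℕ) (μ : ℂ) : ℂ :=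
  2048 * (6 * (m + 1 / 2) ^ 4 - 3 * (m + 1 / 2) ^ 2 * μ ^ 2 + μ ^ 4) / (m + 1 / 2) ^ 3 *
    if m = 0 then 1 else ((1 / 4 - μ ^ 2) / ((m + 1 / 2) ^ 2 - μ ^ 2)) ^ 3

theorem natCast_add_half_ne_zero (m : ℕ) : (m + 1 / 2 : ℂ) ≠ 0 :=
  ne_of_apply_ne re (by simpa using by positivity)

theorem sq_sub_sq_ne_zero_of_abs_re_lt {b : ℝ} {μ : ℂ} (hμ : |μ.re| < b) :
    (b : ℂ) ^ 2 - μ ^ 2 ≠ 0 := by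
  obtain ⟨hl, hr⟩ := abs_lt.1 hμ
  rw [sq_sub_sq]
  exact mul_ne_zero (ne_of_apply_ne re (by simpa using by linarith))
    (ne_of_apply_ne re (by simpa using by linarith))

theorem shiftTerm_eq_div {b μ : ℂ} (hb : b ≠ 0) (hadd : b + μ ≠ 0) (hsub : b - μ ≠ 0) :
    shiftTerm b μ = 2048 * μ ^ 2 * (6 * b ^ 4 - 3 * b ^ 2 * μ ^ 2 + μ ^ 4) /
      (b ^ 3 * (b ^ 2 - μ ^ 2) ^ 3) := by
  rw [shiftTerm, sq_sub_sq]
  field_simp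
  ring

theorem isStripCore_shiftTerm (m : ℕ) : IsStripCore (shiftTerm (m + 1 / 2)) (shiftCore m) where
  differentiableOn := by
    unfold shiftCore
    rcases eq_or_ne m 0 with rfl | hm
    · simp only [if_true]
      fun_prop
    · simp only [if_neg hm]
      have hone : (1 : ℝ) ≤ m := mod_cast Nat.one_le_iff_ne_zero.2 hm
      have hden : ∀ μ ∈ verticalClosedStrip (-(1 / 2)) (1 / 2),
          ((m : ℂ) + 1 / 2) ^ 2 - μ ^ 2 ≠ 0 := fun μ hμ => by
        have h := sq_sub_sq_ne_zero_of_abs_re_lt (b := m + 1 / 2)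
          ((abs_re_lt_one_of_mem_strip hμ).trans_le (by linarith))
        push_cast at h
        exact h
      fun_prop (disch := assumption)
  even μ := by simp only [shiftCore, neg_sq, Even.neg_pow (by decide : Even 4)]
  eq_div μ hμ := by
    have hb := natCast_add_half_ne_zero m
    have hquarter := quarter_sub_sq_ne_zero hμ
    have hadd : (m + 1 / 2 : ℂ) + μ ≠ 0 := ne_of_apply_ne im (by simpa using hμ)
    have hsub : (m + 1 / 2 : ℂ) - μ ≠ 0 := ne_of_apply_ne im (by simpa using hμ)
    have hden : (m + 1 / 2 : ℂ) ^ 2 - μ ^ 2 ≠ 0 := by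
      rw [sq_sub_sq]; exact mul_ne_zero hadd hsub
    rw [shiftTerm_eq_div hb hadd hsub, shiftCore]
    generalize hβ : (m + 1 / 2 : ℂ) = b at *
    split_ifs with hm
    · subst hm hβ
      rw [Nat.cast_zero, zero_add, show (1 / 2 : ℂ) ^ 2 = 1 / 4 by norm_num]
      field_simp
    · generalize 1 / 4 - μ ^ 2 = d at *
      field_simp

theorem shiftCore_zero_right (m : ℕ) : 64 * shiftCore m 0 = 12288 * (1 / (m + 1 / 2) ^ 5) := by
  have hb := natCast_add_half_ne_zero m
  rw [shiftCore]
  split_ifs with hm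
  · subst hm
    norm_num
  · generalize (m + 1 / 2 : ℂ) = b at *
    field_simp
    ring

theorem tendsto_shiftTerm_cobounded (b : ℂ) :
    Tendsto (shiftTerm b) (cobounded ℂ) (𝓝 (-2048 * (1 / b ^ 3))) := by
  have hadd : Tendsto (fun μ => (b + μ)⁻¹) (cobounded ℂ) (𝓝 0) :=
    tendsto_inv₀_cobounded.comp (tendsto_const_add_cobounded b)
  have hsub : Tendsto (fun μ => (b - μ)⁻¹) (cobounded ℂ) (𝓝 0) :=
    tendsto_inv₀_cobounded.comp (tendsto_const_sub_cobounded b)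
  have h := (((hadd.pow 3).add (hsub.pow 3)).sub_const (2 / b ^ 3)).const_mul 1024
  rw [show -2048 * (1 / b ^ 3) = 1024 * (0 ^ 3 + 0 ^ 3 - 2 / b ^ 3) by ring]
  refine h.congr fun μ => ?_
  rw [shiftTerm, inv_pow, inv_pow, one_div, one_div]

theorem sum_shiftTerm_sub (n : ℕ) (ν : ℂ) :
    ∑ m ∈ range n, (shiftTerm (m + 1 / 2) (1 / 2 + ν) - shiftTerm (m + 1 / 2) (1 / 2 - ν)) =
      1024 * (1 / (n + ν) ^ 3 - 1 / (n - ν) ^ 3) - 2048 / ν ^ 3 := by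
  have hstep : ∀ m : ℕ,
      shiftTerm (m + 1 / 2) (1 / 2 + ν) - shiftTerm (m + 1 / 2) (1 / 2 - ν) =
        1024 * (1 / ((m + 1 : ℕ) + ν) ^ 3 - 1 / ((m + 1 : ℕ) - ν) ^ 3) -
          1024 * (1 / (m + ν) ^ 3 - 1 / (m - ν) ^ 3) := fun m => by
    rw [shiftTerm, shiftTerm, Nat.cast_succ,
      show (m : ℂ) + 1 / 2 + (1 / 2 + ν) = m + 1 + ν by ring,
      show (m : ℂ) + 1 / 2 - (1 / 2 + ν) = m - ν by ring,
      show (m : ℂ) + 1 / 2 + (1 / 2 - ν) = m + 1 - ν by ring,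
      show (m : ℂ) + 1 / 2 - (1 / 2 - ν) = m + ν by ring]
    ring
  simp only [hstep]
  rw [Finset.sum_range_sub fun m : ℕ => 1024 * (1 / (m + ν) ^ 3 - 1 / (m - ν) ^ 3), Nat.cast_zero,
    zero_add, zero_sub, Odd.neg_pow (by decide)]
  ring

end ShiftTerm

section PartialSums

theorem isStripCore_wzG (n : ℕ) : IsStripCore (wzG n) (wzCore n) where
  differentiableOn := by
    have hmate : ∀ k : ℕ,
        DifferentiableOn ℂ (mateFactor k) (verticalClosedStrip (-(1 / 2)) (1 / 2)) := fun k => by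
      have hden : ∀ μ ∈ verticalClosedStrip (-(1 / 2)) (1 / 2),
          (((k : ℂ) + 3 / 2) ^ 2 - μ ^ 2) ^ 3 ≠ 0 := fun μ hμ => pow_ne_zero 3 <| by
        have h := sq_sub_sq_ne_zero_of_abs_re_lt (b := k + 3 / 2)
          ((abs_re_lt_one_of_mem_strip hμ).trans_le (by linarith [k.cast_nonneg (α := ℝ)]))
        push_cast at h
        exact h
      unfold mateFactor
      fun_prop (disch := assumption)
    unfold wzCore
    refine DifferentiableOn.mul (.const_mul (.fun_finsetProd fun k _ => hmate k) _) ?_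
    unfold wzPoly
    fun_prop
  even := wzCore_even n
  eq_div _ _ := rfl

/-- The partial sums to which `IsStripCore.norm_le` is applied. -/
noncomputable def wzSum (n : ℕ) (μ : ℂ) : ℂ :=
  ∑ k ∈ range n, (wzG k μ + shiftTerm (k + 1 / 2) μ)

theorem isStripCore_wzSum (n : ℕ) :
    IsStripCore (wzSum n) fun μ => ∑ k ∈ range n, (wzCore k μ + shiftCore k μ) :=
  .sum _ fun k _ => (isStripCore_wzG k).add (isStripCore_shiftTerm k)

theorem wzSum_half_add_sub (n : ℕ) {ν : ℂ} (hν : ν ∈ integerComplement) :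
    wzSum n (1 / 2 + ν) - wzSum n (1 / 2 - ν) =
      wzF n ν + 1024 * (1 / (n + ν) ^ 3 - 1 / (n - ν) ^ 3) := by
  have hG : ∀ k, wzG k (1 / 2 - ν) = wzG k (ν - 1 / 2) := fun k => by
    rw [← wzG_even k, neg_sub]
  have h := congrArg₂ (· + ·) (sum_wzG_sub n hν) (sum_shiftTerm_sub n ν)
  rw [← Finset.sum_add_distrib] at h
  rw [wzSum, wzSum, ← Finset.sum_sub_distrib]
  simp only [hG, add_comm (1 / 2) ν] at h ⊢
  convert h using 1
  · exact Finset.sum_congr rfl fun k _ => by ring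
  · ring

end PartialSums

section HalfIntegers

theorem hasSum_one_div_natCast_add_half_pow {k : ℕ} (hk : 1 < k) :
    HasSum (fun m : ℕ => 1 / (m + 1 / 2 : ℂ) ^ k) ((2 ^ k - 1) * riemannZeta k) := by
  have hzeta : HasSum (fun n : ℕ => 1 / (n : ℂ) ^ k) (riemannZeta k) := by
    rw [zeta_nat_eq_tsum_of_gt_one hk]
    refine Summable.hasSum ?_
    simpa only [cpow_natCast] using (summable_one_div_nat_cpow (p := k)).2 (by simpa using hk)
  have htwo : (2 : ℂ) ^ k ≠ 0 := pow_ne_zero k two_ne_zero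
  have heven : HasSum (fun m : ℕ => 1 / ((2 * m : ℕ) : ℂ) ^ k) ((2 ^ k)⁻¹ * riemannZeta k) :=
    (hzeta.mul_left _).congr_fun fun m => by
      rw [Nat.cast_mul, mul_pow, Nat.cast_ofNat, one_div, mul_inv, one_div]
  obtain ⟨S, hodd⟩ : Summable fun m : ℕ => 1 / ((2 * m + 1 : ℕ) : ℂ) ^ k :=
    hzeta.summable.comp_injective (i := fun m : ℕ => 2 * m + 1) fun a b h => by simpa using h
  have hS : (2 ^ k)⁻¹ * riemannZeta k + S = riemannZeta k :=
    (HasSum.even_add_odd (f := fun n : ℕ => 1 / (n : ℂ) ^ k) heven hodd).unique hzeta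
  have hvalue : (2 ^ k - 1) * riemannZeta k = 2 ^ k * S := by
    linear_combination riemannZeta k * mul_inv_cancel₀ htwo - 2 ^ k * hS
  rw [hvalue]
  refine (hodd.mul_left _).congr_fun fun m => ?_
  rw [show ((2 * m + 1 : ℕ) : ℂ) = 2 * (m + 1 / 2) by push_cast; ring, mul_pow]
  field_simp

theorem natCast_add_half_mem_integerComplement (m : ℕ) : (m + 1 / 2 : ℂ) ∈ integerComplement := by
  rintro ⟨z, hz⟩
  have h : (2 * z : ℂ) = 2 * m + 1 := by rw [hz]; ring
  norm_cast at h
  omega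

theorem sum_wzG_natCast (n M : ℕ) :
    ∑ k ∈ range n, wzG k M =
      ∑ m ∈ range M, (wzF n (m + 1 / 2) + 2048 / (m + 1 / 2 : ℂ) ^ 3) := by
  have hzero : ∑ k ∈ range n, wzG k (0 : ℕ) = 0 := by simp [wzG]
  rw [← sub_zero (∑ k ∈ range n, wzG k M), ← hzero,
    ← Finset.sum_range_sub fun m : ℕ => ∑ k ∈ range n, wzG k m]
  refine Finset.sum_congr rfl fun m _ => ?_
  rw [← sum_wzG_sub n (natCast_add_half_mem_integerComplement m), Finset.sum_sub_distrib]
  push_cast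
  ring_nf

theorem wzF_natCast_add_half_eq_zero {n m : ℕ} (h : m < 2 * n) : wzF n (m + 1 / 2) = 0 := by
  have hprod : ∏ k ∈ range n, wzFactor k (m + 1 / 2) = 0 := by
    refine Finset.prod_eq_zero (i := m / 2) (Finset.mem_range.2 (by omega)) ?_
    obtain ⟨j, rfl | rfl⟩ := m.even_or_odd'
    · rw [Nat.mul_div_cancel_left j two_pos, wzFactor]
      push_cast
      ring
    · rw [show (2 * j + 1) / 2 = j by omega, wzFactor]
      push_cast
      ring
  rw [wzF, hprod, mul_zero, zero_div]

end HalfIntegers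

section Bounds

/-- The bound for `‖ν‖³ ‖wzF n ν‖ / 2048`, for imaginary and for half-integral `ν`, that results
from `‖wzFactor k ν‖ ≤ 20`. -/
noncomputable def wzBound (n : ℕ) : ℝ :=
  |wzCoeff n| * 20 ^ n

theorem wzBound_nonneg (n : ℕ) : 0 ≤ wzBound n := by
  unfold wzBound
  positivity

theorem wzBound_succ_le {n : ℕ} (hn : 3 ≤ n) : wzBound (n + 1) ≤ 9 / 10 * wzBound n := by
  obtain ⟨m, rfl⟩ := Nat.exists_eq_add_of_le hn
  generalize hN : ((3 + m : ℕ) : ℝ) = N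
  have hN0 : 0 ≤ N := hN ▸ Nat.cast_nonneg _
  have hcoeff : |wzCoeff (3 + m + 1)| *
      (5 * (2 * N + 1) * (5 * N + 1) * (5 * N + 2) * (5 * N + 3) * (5 * N + 4)) =
        |wzCoeff (3 + m)| * (128 * (N + 1) ^ 5) := by
    have h := congrArg abs (wzCoeff_succ (3 + m))
    rw [abs_neg, abs_mul (wzCoeff _), abs_mul (wzCoeff _), hN] at h
    rwa [abs_of_nonneg (a := 5 * _ * _ * _ * _ * _) (by positivity),
      abs_of_nonneg (a := 128 * _) (by positivity)] at h
  have hratio : 20 * (128 * (N + 1) ^ 5) ≤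
      9 / 10 * (5 * (2 * N + 1) * (5 * N + 1) * (5 * N + 2) * (5 * N + 3) * (5 * N + 4)) := by
    rw [← sub_nonneg, ← hN]
    push_cast
    ring_nf
    positivity
  rw [wzBound, wzBound]
  refine le_of_mul_le_mul_right ?_ (show 0 <
    5 * (2 * N + 1) * (5 * N + 1) * (5 * N + 2) * (5 * N + 3) * (5 * N + 4) by positivity)
  calc |wzCoeff (3 + m + 1)| * 20 ^ (3 + m + 1) *
        (5 * (2 * N + 1) * (5 * N + 1) * (5 * N + 2) * (5 * N + 3) * (5 * N + 4))
      = |wzCoeff (3 + m)| * 20 ^ (3 + m) * (20 * (128 * (N + 1) ^ 5)) := by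
        linear_combination 20 ^ (3 + m + 1) * hcoeff
    _ ≤ |wzCoeff (3 + m)| * 20 ^ (3 + m) * (9 / 10 *
        (5 * (2 * N + 1) * (5 * N + 1) * (5 * N + 2) * (5 * N + 3) * (5 * N + 4))) := by gcongr
    _ = _ := by ring

theorem summable_natCast_mul_wzBound : Summable fun n : ℕ => n * wzBound n := by
  refine summable_of_ratio_norm_eventually_le (r := 19 / 20) (by norm_num) ?_
  filter_upwards [eventually_ge_atTop 18] with n hn
  have hn' : (18 : ℝ) ≤ n := mod_cast hn
  have h := wzBound_nonneg n
  rw [Real.norm_of_nonneg (mul_nonneg (Nat.cast_nonneg _) (wzBound_nonneg _)),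
    Real.norm_of_nonneg (mul_nonneg (Nat.cast_nonneg _) h)]
  calc ((n + 1 : ℕ) : ℝ) * wzBound (n + 1)
      ≤ (n + 1 : ℕ) * (9 / 10 * wzBound n) := by gcongr; exact wzBound_succ_le (by omega)
    _ = (9 / 10 * (n + 1)) * wzBound n := by push_cast; ring
    _ ≤ (19 / 20 * n) * wzBound n := mul_le_mul_of_nonneg_right (by linarith) h
    _ = 19 / 20 * (n * wzBound n) := by ring

theorem tendsto_wzBound : Tendsto wzBound atTop (𝓝 0) := by
  refine squeeze_zero' (.of_forall wzBound_nonneg) ?_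
    summable_natCast_mul_wzBound.tendsto_atTop_zero
  filter_upwards [eventually_ge_atTop 1] with n hn
  exact le_mul_of_one_le_left (wzBound_nonneg n) (mod_cast hn)

theorem norm_wzFactor_of_sq_eq (k : ℕ) {ν : ℂ} {s : ℝ} (hs : ν ^ 2 = s) :
    ‖wzFactor k ν‖ = |k ^ 2 - 4 * s| * |(2 * k + 1 / 2) ^ 2 - s| * |(2 * k + 3 / 2) ^ 2 - s| /
      |(k + 1) ^ 2 - s| ^ 3 := by
  have h : wzFactor k ν = ((k ^ 2 - 4 * s) * ((2 * k + 1 / 2) ^ 2 - s) *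
      ((2 * k + 3 / 2) ^ 2 - s) / ((k + 1) ^ 2 - s) ^ 3 : ℝ) := by
    rw [wzFactor, hs]
    push_cast
    rfl
  rw [h, norm_real, Real.norm_eq_abs, abs_div, abs_mul, abs_mul, abs_pow]

theorem norm_wzFactor_le_of_sq_nonpos (k : ℕ) {ν : ℂ} {s : ℝ} (hs : ν ^ 2 = s) (hs0 : s ≤ 0) :
    ‖wzFactor k ν‖ ≤ 20 := by
  obtain ⟨Y, rfl⟩ : ∃ Y, s = -Y := ⟨-s, (neg_neg s).symm⟩
  have hY : 0 ≤ Y := neg_nonpos.1 hs0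
  rw [norm_wzFactor_of_sq_eq k hs]
  simp only [mul_neg, sub_neg_eq_add]
  rw [abs_of_nonneg (by positivity), abs_of_nonneg (by positivity), abs_of_nonneg (by positivity),
    abs_of_nonneg (by positivity), div_le_iff₀ (by positivity)]
  calc ((k : ℝ) ^ 2 + 4 * Y) * ((2 * k + 1 / 2) ^ 2 + Y) * ((2 * k + 3 / 2) ^ 2 + Y)
      ≤ ((k + 1) ^ 2 + 4 * Y) * ((2 * (k + 1)) ^ 2 + Y) * ((2 * (k + 1)) ^ 2 + Y) := by
        gcongr <;> linarith
    _ ≤ 20 * ((k + 1) ^ 2 + Y) ^ 3 := by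
        generalize hX : (k + 1 : ℝ) ^ 2 = X
        have hX0 : 0 ≤ X := hX ▸ sq_nonneg _
        have : 0 ≤ X * (2 * X - 3 * Y) ^ 2 + 18 * X * Y ^ 2 + 16 * Y ^ 3 := by positivity
        rw [mul_pow, hX]
        linarith

theorem norm_wzFactor_le_of_le_sq (k : ℕ) {ν : ℂ} {s : ℝ} (hs : ν ^ 2 = s)
    (hks : (2 * k + 5 / 2) ^ 2 ≤ s) : ‖wzFactor k ν‖ ≤ 20 := by
  have hk : (0 : ℝ) ≤ k := k.cast_nonneg
  have hs0 : 0 ≤ s := le_trans (sq_nonneg _) hks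
  have h₁ : |(k : ℝ) ^ 2 - 4 * s| ≤ 4 * s := by rw [abs_le]; constructor <;> nlinarith [hk]
  have h₂ : |(2 * k + 1 / 2 : ℝ) ^ 2 - s| ≤ s := by rw [abs_le]; constructor <;> nlinarith
  have h₃ : |(2 * k + 3 / 2 : ℝ) ^ 2 - s| ≤ s := by rw [abs_le]; constructor <;> nlinarith
  have h₄ : 3 / 4 * s ≤ |(k + 1 : ℝ) ^ 2 - s| := by
    rw [abs_sub_comm]
    exact le_trans (by nlinarith) (le_abs_self _)
  rw [norm_wzFactor_of_sq_eq k hs]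
  refine div_le_of_le_mul₀ (by positivity) (by norm_num) ?_
  calc |(k : ℝ) ^ 2 - 4 * s| * |(2 * k + 1 / 2) ^ 2 - s| * |(2 * k + 3 / 2) ^ 2 - s|
      ≤ 4 * s * s * s := by gcongr
    _ ≤ 20 * (3 / 4 * s) ^ 3 := by linarith [pow_nonneg hs0 3]
    _ ≤ 20 * |(k + 1 : ℝ) ^ 2 - s| ^ 3 := by gcongr

theorem norm_wzF_le {n : ℕ} {ν : ℂ} (h : ∀ k < n, ‖wzFactor k ν‖ ≤ 20) :
    ‖wzF n ν‖ ≤ 2048 * wzBound n / ‖ν‖ ^ 3 := by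
  have hprod : ∏ k ∈ range n, ‖wzFactor k ν‖ ≤ 20 ^ n := by
    simpa using Finset.prod_le_prod (s := range n) (fun _ _ => norm_nonneg _) fun k hk =>
      h k (Finset.mem_range.1 hk)
  rw [wzF, norm_div, norm_mul, norm_mul, norm_prod, norm_pow, norm_real, Real.norm_eq_abs, wzBound,
    ← mul_assoc]
  norm_num only [norm_neg, norm_ofNat]
  gcongr

theorem norm_wzF_mul_I_le (n : ℕ) {y : ℝ} (hy : 0 ≤ y) :
    ‖wzF n (y * I)‖ ≤ 2048 * wzBound n / y ^ 3 := by
  have h := norm_wzF_le (n := n) (ν := y * I) fun k _ =>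
    norm_wzFactor_le_of_sq_nonpos k (s := -y ^ 2) (by rw [mul_pow, I_sq]; push_cast; ring)
      (neg_nonpos.2 (sq_nonneg y))
  rwa [norm_mul, norm_I, mul_one, norm_real, Real.norm_of_nonneg hy] at h

theorem norm_wzF_natCast_add_half_le (n m : ℕ) :
    ‖wzF n (m + 1 / 2)‖ ≤ 2048 * wzBound n * ‖1 / (m + 1 / 2 : ℂ) ^ 3‖ := by
  rcases lt_or_ge m (2 * n) with h | h
  · rw [wzF_natCast_add_half_eq_zero h, norm_zero]
    have := wzBound_nonneg n
    positivity
  · rw [norm_div, norm_one, norm_pow, mul_one_div]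
    refine norm_wzF_le fun k hk =>
      norm_wzFactor_le_of_le_sq k (s := (m + 1 / 2) ^ 2) (by push_cast; rfl) ?_
    have hkm : (2 * k + 2 : ℝ) ≤ m := mod_cast (by omega : 2 * k + 2 ≤ m)
    exact pow_le_pow_left₀ (by positivity) (by linarith) 2

end Bounds

section PartialSumLimit

theorem norm_sub_tsum_le {n : ℕ} {l : ℂ}
    (hl : Tendsto (fun μ => ∑ k ∈ range n, wzG k μ) (cobounded ℂ) (𝓝 l)) :
    ‖l - 2048 * ∑' m : ℕ, 1 / (m + 1 / 2 : ℂ) ^ 3‖ ≤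
      2048 * wzBound n * ∑' m : ℕ, ‖1 / (m + 1 / 2 : ℂ) ^ 3‖ := by
  have hs := (hasSum_one_div_natCast_add_half_pow (k := 3) (by norm_num)).summable
  have hseq := (hl.comp tendsto_natCast_atTop_cobounded).sub
    (hs.hasSum.tendsto_sum_nat.const_mul 2048)
  refine le_of_tendsto hseq.norm (.of_forall fun M => ?_)
  calc ‖∑ k ∈ range n, wzG k M - 2048 * ∑ m ∈ range M, 1 / (m + 1 / 2 : ℂ) ^ 3‖
      = ‖∑ m ∈ range M, wzF n (m + 1 / 2)‖ := by
        simp only [sum_wzG_natCast, Finset.mul_sum, mul_one_div, Finset.sum_add_distrib,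
          add_sub_cancel_right]
    _ ≤ ∑ m ∈ range M, 2048 * wzBound n * ‖1 / (m + 1 / 2 : ℂ) ^ 3‖ :=
        norm_sum_le_of_le _ fun m _ => norm_wzF_natCast_add_half_le n m
    _ ≤ 2048 * wzBound n * ∑' m : ℕ, ‖1 / (m + 1 / 2 : ℂ) ^ 3‖ := by
        rw [← Finset.mul_sum]
        have := wzBound_nonneg n
        gcongr
        exact hs.norm.sum_le_tsum _ fun _ _ => norm_nonneg _

theorem exists_tendsto_wzSum_cobounded :
    ∃ l : ℕ → ℂ, (∀ n, Tendsto (wzSum n) (cobounded ℂ) (𝓝 (l n))) ∧ Tendsto l atTop (𝓝 0) := by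
  choose g hg using exists_tendsto_wzG_cobounded
  have hsum : ∀ n, Tendsto (fun μ => ∑ k ∈ range n, wzG k μ) (cobounded ℂ)
      (𝓝 (∑ k ∈ range n, g k)) := fun n => tendsto_finsetSum _ fun k _ => hg k
  refine ⟨fun n => ∑ k ∈ range n, (g k + -2048 * (1 / (k + 1 / 2) ^ 3)),
    fun n => tendsto_finsetSum _ fun k _ => (hg k).add (tendsto_shiftTerm_cobounded _), ?_⟩
  have hs := (hasSum_one_div_natCast_add_half_pow (k := 3) (by norm_num)).summable
  have hbound : Tendsto (fun n => 2048 * wzBound n * ∑' m : ℕ, ‖1 / (m + 1 / 2 : ℂ) ^ 3‖) atTop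
      (𝓝 0) := by
    have h := (tendsto_wzBound.const_mul 2048).mul_const (∑' m : ℕ, ‖1 / (m + 1 / 2 : ℂ) ^ 3‖)
    rwa [mul_zero, zero_mul] at h
  have hg_lim := tendsto_sub_nhds_zero_iff.1
    (squeeze_zero_norm (fun n => norm_sub_tsum_le (hsum n)) hbound)
  have h := hg_lim.sub (hs.hasSum.tendsto_sum_nat.const_mul 2048)
  rw [sub_self] at h
  refine h.congr fun n => ?_
  rw [Finset.sum_add_distrib, ← Finset.mul_sum, neg_mul, sub_eq_add_neg]

theorem norm_one_div_cube_le {n : ℕ} (hn : 0 < n) {z : ℂ} (hz : z.re = n) :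
    ‖1 / z ^ 3‖ ≤ 1 / n / (1 + z.im ^ 2) := by
  have hn' : (1 : ℝ) ≤ n := mod_cast hn
  have hre : (n : ℝ) ≤ ‖z‖ := hz ▸ re_le_norm z
  have hsq : 1 + z.im ^ 2 ≤ ‖z‖ ^ 2 := by
    rw [Complex.sq_norm, normSq_apply, hz]
    nlinarith
  rw [norm_div, norm_one, norm_pow, div_div]
  refine one_div_le_one_div_of_le (by positivity) ?_
  calc n * (1 + z.im ^ 2) ≤ ‖z‖ * ‖z‖ ^ 2 := by gcongr
    _ = ‖z‖ ^ 3 := by ring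

theorem norm_shift_le {n : ℕ} (hn : 0 < n) (y : ℝ) :
    ‖1024 * (1 / (n + y * I) ^ 3 - 1 / (n - y * I) ^ 3)‖ ≤ 2048 / n / (1 + y ^ 2) := by
  have hadd := norm_one_div_cube_le hn (z := n + y * I) (by simp)
  have hsub := norm_one_div_cube_le hn (z := n - y * I) (by simp)
  rw [show (n + y * I : ℂ).im = y by simp] at hadd
  rw [show (n - y * I : ℂ).im = -y by simp, neg_sq] at hsub
  rw [norm_mul, norm_ofNat]
  calc 1024 * ‖1 / (n + y * I) ^ 3 - 1 / (n - y * I) ^ 3‖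
      ≤ 1024 * (1 / n / (1 + y ^ 2) + 1 / n / (1 + y ^ 2)) := by
        gcongr
        exact norm_sub_le_of_le hadd hsub
    _ = 2048 / n / (1 + y ^ 2) := by ring

theorem mul_I_mem_integerComplement {y : ℝ} (hy : y ≠ 0) : y * I ∈ integerComplement :=
  fun ⟨m, hm⟩ => hy (by simpa using (congrArg im hm).symm)

theorem norm_wzSum_jump_mul_tanh_le {n : ℕ} (hn : 0 < n) {y : ℝ} (hy : 0 < y) :
    ‖wzSum n (1 / 2 + y * I) - wzSum n (1 / 2 - y * I)‖ * Real.tanh (π * y) ^ 3 ≤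
      (2048 * (128 * wzBound n) + 2048 / n) / (1 + y ^ 2) := by
  have htanh : 0 ≤ Real.tanh (π * y) := tanh_nonneg (by positivity)
  have hbound := wzBound_nonneg n
  rw [wzSum_half_add_sub n (mul_I_mem_integerComplement hy.ne')]
  calc ‖wzF n (y * I) + 1024 * (1 / (n + y * I) ^ 3 - 1 / (n - y * I) ^ 3)‖ *
        Real.tanh (π * y) ^ 3
      ≤ (2048 * wzBound n / y ^ 3 + 2048 / n / (1 + y ^ 2)) * Real.tanh (π * y) ^ 3 := by
        gcongr
        exact norm_add_le_of_le (norm_wzF_mul_I_le n hy.le) (norm_shift_le hn y)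
    _ = 2048 * wzBound n * (Real.tanh (π * y) ^ 3 / y ^ 3) +
        2048 / n / (1 + y ^ 2) * Real.tanh (π * y) ^ 3 := by ring
    _ ≤ 2048 * wzBound n * (128 / (1 + y ^ 2)) + 2048 / n / (1 + y ^ 2) * 1 := by
        refine add_le_add (mul_le_mul_of_nonneg_left (tanh_pi_mul_cube_div_cube_le hy) ?_)
          (mul_le_mul_of_nonneg_left (pow_le_one₀ htanh (Real.tanh_lt_one _).le) ?_) <;>
        positivity
    _ = (2048 * (128 * wzBound n) + 2048 / n) / (1 + y ^ 2) := by ring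

theorem tendsto_sum_wzCore_add_shiftCore :
    Tendsto (fun n => 64 * ∑ k ∈ range n, (wzCore k 0 + shiftCore k 0)) atTop (𝓝 0) := by
  obtain ⟨l, hl, hl_zero⟩ := exists_tendsto_wzSum_cobounded
  have hbound : Tendsto (fun n : ℕ => (2048 * (128 * wzBound n) + 2048 / n) * (π / 2)) atTop
      (𝓝 0) := by
    simpa using (((tendsto_wzBound.const_mul 128).const_mul 2048).add
      (tendsto_const_div_atTop_nhds_zero_nat 2048)).mul_const (π / 2)
  have hnorm := squeeze_zero_norm' ((eventually_gt_atTop 0).mono fun n hn =>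
    (isStripCore_wzSum n).norm_le ((hl n).mono_left comap_im_atTop_le_cobounded) fun y hy =>
      norm_wzSum_jump_mul_tanh_le hn hy) hbound
  have h := (hnorm.sub hl_zero).mul_const ((π : ℂ) ^ 2)
  rw [sub_zero, zero_mul] at h
  have hpi : (π : ℂ) ≠ 0 := ofReal_ne_zero.2 Real.pi_ne_zero
  refine h.congr fun n => ?_
  rw [add_sub_cancel_right, div_mul_cancel₀ _ (pow_ne_zero 2 hpi)]

end PartialSumLimit

section ZetaSeries

theorem prod_mateFactor_zero_mul (n : ℕ) :
    256 * (∏ k ∈ range n, mateFactor k 0) * (2 * n + 1) ^ 2 * (n + 1) ^ 4 *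
      risingFactorial (1 / 2) (n + 1) ^ 4 = 16 ^ (n + 1) * risingFactorial 1 (n + 1) ^ 4 := by
  induction n with
  | zero =>
    norm_num [risingFactorial]
  | succ n ih =>
    have h : mateFactor n 0 * (2 * n + 3) ^ 6 = 256 * (n + 1) ^ 4 * (2 * n + 1) ^ 2 := by
      have h₃ : (2 * n + 3 : ℂ) ≠ 0 := mod_cast (by omega : 2 * n + 3 ≠ 0)
      rw [mateFactor, show (n + 3 / 2 : ℂ) = (2 * n + 3) / 2 by ring]
      generalize (2 * n + 3 : ℂ) = t at *
      field_simp
      ring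
    rw [Finset.prod_range_succ, risingFactorial_succ _ (n + 1), risingFactorial_succ _ (n + 1)]
    push_cast at ih ⊢
    linear_combination 16 * (n + 2) ^ 4 * ih + 16 * (∏ k ∈ range n, mateFactor k 0) *
      (n + 2) ^ 4 * risingFactorial (1 / 2) (n + 1) ^ 4 * h

theorem ofReal_summand_eq (n : ℕ) :
    (((-(2 ^ 10) / 5 ^ 5 : ℝ) ^ (n + 1) * (risingFactorial 1 (n + 1)) ^ 9 /
        ((risingFactorial (1 / 2) (n + 1)) ^ 5 * risingFactorial (1 / 5) (n + 1) *
          risingFactorial (2 / 5) (n + 1) * risingFactorial (3 / 5) (n + 1) *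
          risingFactorial (4 / 5) (n + 1)) *
        (30 - 425 * ((n : ℝ) + 1) + 2275 * ((n : ℝ) + 1) ^ 2 - 5600 * ((n : ℝ) + 1) ^ 3 +
          5532 * ((n : ℝ) + 1) ^ 4) / ((n : ℝ) + 1) ^ 9 : ℝ) : ℂ) = 64 * wzCore n 0 := by
  have hN : (n + 1 : ℂ) ≠ 0 := n.cast_add_one_ne_zero
  have hhalf : (risingFactorial (1 / 2) (n + 1) : ℂ) ≠ 0 :=
    ofReal_ne_zero.2 (risingFactorial_pos (by norm_num) _).ne'
  have hprod : 64 * (4 * (∏ k ∈ range n, mateFactor k 0) * (2 * (n + 1) - 1) ^ 2) =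
      16 ^ (n + 1) * risingFactorial 1 (n + 1) ^ 4 /
        ((n + 1) ^ 4 * risingFactorial (1 / 2) (n + 1) ^ 4) := by
    rw [eq_div_iff (by positivity), ← prod_mateFactor_zero_mul]
    ring
  have hpow : ((-(2 ^ 10) / 5 ^ 5 : ℝ) : ℂ) ^ (n + 1) =
      16 ^ (n + 1) * ((-2 ^ 6 / 5 ^ 5 : ℝ) : ℂ) ^ (n + 1) := by
    rw [← mul_pow]
    norm_num
  calc _ = (16 : ℂ) ^ (n + 1) * risingFactorial 1 (n + 1) ^ 4 /
        ((n + 1) ^ 4 * risingFactorial (1 / 2) (n + 1) ^ 4) * (wzCoeff (n + 1) / (n + 1) ^ 5 *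
        (30 - 425 * (n + 1) + 2275 * (n + 1) ^ 2 - 5600 * (n + 1) ^ 3 + 5532 * (n + 1) ^ 4)) := by
        rw [wzCoeff]
        push_cast at hpow ⊢
        rw [hpow]
        generalize (n + 1 : ℂ) = N
        ring
    _ = 64 * wzCore n 0 := by
        rw [← hprod, wzCore, wzPoly]
        ring

theorem norm_mateFactor_zero_le (k : ℕ) : ‖mateFactor k 0‖ ≤ 20 := by
  have h : mateFactor k 0 =
      ((k + 1) ^ 2 * (2 * k + 1) ^ 2 * (2 * k + 2) ^ 2 / ((k + 3 / 2) ^ 2) ^ 3 : ℝ) := by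
    simp [mateFactor]
  rw [h, norm_real, Real.norm_of_nonneg (by positivity), div_le_iff₀ (by positivity)]
  calc (k + 1 : ℝ) ^ 2 * (2 * k + 1) ^ 2 * (2 * k + 2) ^ 2
      ≤ (k + 3 / 2 : ℝ) ^ 2 * (2 * (k + 3 / 2)) ^ 2 * (2 * (k + 3 / 2)) ^ 2 := by
        gcongr <;> linarith
    _ = 16 * ((k + 3 / 2 : ℝ) ^ 2) ^ 3 := by ring
    _ ≤ 20 * ((k + 3 / 2 : ℝ) ^ 2) ^ 3 := by gcongr; norm_num

theorem norm_wzPoly_zero_le (n : ℕ) : ‖wzPoly (n + 1) 0‖ ≤ 22128 * (n + 1) ^ 6 := by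
  have h : wzPoly (n + 1) 0 = ((30 - 425 * (n + 1) + 2275 * (n + 1) ^ 2 - 5600 * (n + 1) ^ 3 +
      5532 * (n + 1) ^ 4) * (2 * n + 1) ^ 2 : ℝ) := by
    rw [wzPoly]
    push_cast
    ring
  have hnonneg : (0 : ℝ) ≤ 30 - 425 * (n + 1) + 2275 * (n + 1) ^ 2 - 5600 * (n + 1) ^ 3 +
      5532 * (n + 1) ^ 4 := by
    ring_nf
    positivity
  have hle : (30 - 425 * (n + 1) + 2275 * (n + 1) ^ 2 - 5600 * (n + 1) ^ 3 +
      5532 * (n + 1) ^ 4 : ℝ) ≤ 5532 * (n + 1) ^ 4 := by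
    rw [← sub_nonneg]
    ring_nf
    positivity
  rw [h, norm_real, Real.norm_of_nonneg (mul_nonneg hnonneg (sq_nonneg _))]
  calc _ ≤ 5532 * (n + 1 : ℝ) ^ 4 * (2 * (n + 1)) ^ 2 := by
        gcongr
        linarith
    _ = 22128 * (n + 1) ^ 6 := by ring

theorem norm_wzCore_zero_le (n : ℕ) :
    ‖wzCore n 0‖ ≤ 22128 / 5 * ((n + 1 : ℕ) * wzBound (n + 1)) := by
  have hprod : ∏ k ∈ range n, ‖mateFactor k 0‖ ≤ 20 ^ n := by
    simpa using Finset.prod_le_prod (s := range n) (fun _ _ => norm_nonneg _) fun k _ =>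
      norm_mateFactor_zero_le k
  have hpoly := norm_wzPoly_zero_le n
  have hN : ‖(n + 1 : ℂ)‖ = n + 1 := by
    rw [← Nat.cast_add_one, norm_natCast, Nat.cast_add_one]
  rw [wzCore, zero_pow two_ne_zero, norm_mul, norm_mul, norm_div, norm_mul, norm_pow, norm_prod, hN,
    norm_real, Real.norm_eq_abs, norm_ofNat]
  calc 4 * |wzCoeff (n + 1)| / (n + 1) ^ 5 * (∏ k ∈ range n, ‖mateFactor k 0‖) *
        ‖wzPoly (n + 1) 0‖
      ≤ 4 * |wzCoeff (n + 1)| / (n + 1) ^ 5 * 20 ^ n * (22128 * (n + 1) ^ 6) := by gcongr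
    _ = 22128 / 5 * ((n + 1 : ℕ) * wzBound (n + 1)) := by
        rw [wzBound]
        push_cast
        field_simp
        ring

theorem summable_wzCore_zero : Summable fun n => wzCore n 0 :=
  .of_norm_bounded (((summable_nat_add_iff 1).2 summable_natCast_mul_wzBound).mul_left _)
    norm_wzCore_zero_le

theorem hasSum_shiftCore_zero :
    HasSum (fun m : ℕ => 64 * shiftCore m 0) (380928 * riemannZeta 5) := by
  have h := (hasSum_one_div_natCast_add_half_pow (k := 5) (by norm_num)).mul_left 12288
  norm_num only [Nat.cast_ofNat, ← mul_assoc] at h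
  simpa only [shiftCore_zero_right] using h

end ZetaSeries

/-- `∑_{n≥1} (−2^10/5^5)^n (1)ₙ^9 / ((1/2)ₙ^5 (1/5)ₙ (2/5)ₙ (3/5)ₙ (4/5)ₙ) ·
    (30 − 425n + 2275n² − 5600n³ + 5532n⁴)/n^9 = −380928 ζ(5)`. -/
theorem zhao_zeta5_series :
    ∑' n : ℕ, ((((-(2 ^ 10) / 5 ^ 5 : ℝ) ^ (n + 1) * (risingFactorial 1 (n + 1)) ^ 9 /
        ((risingFactorial (1 / 2) (n + 1)) ^ 5 * risingFactorial (1 / 5) (n + 1) *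
          risingFactorial (2 / 5) (n + 1) * risingFactorial (3 / 5) (n + 1) *
          risingFactorial (4 / 5) (n + 1)) *
        (30 - 425 * ((n : ℝ) + 1) + 2275 * ((n : ℝ) + 1) ^ 2 - 5600 * ((n : ℝ) + 1) ^ 3 +
          5532 * ((n : ℝ) + 1) ^ 4) / ((n : ℝ) + 1) ^ 9 : ℝ)) : ℂ)
      = -380928 * riemannZeta 5 := by
  have hsum := (summable_wzCore_zero.mul_left 64).hasSum.add hasSum_shiftCore_zero
  have hlim : Tendsto (fun n => ∑ k ∈ range n, (64 * wzCore k 0 + 64 * shiftCore k 0)) atTop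
      (𝓝 0) := by
    simpa only [mul_add, Finset.mul_sum] using tendsto_sum_wzCore_add_shiftCore
  have hzero := tendsto_nhds_unique hsum.tendsto_sum_nat hlim
  rw [tsum_congr ofReal_summand_eq, neg_mul]
  exact eq_neg_of_add_eq_zero_left hzero
end

section
/- The series identity ∑_{n≥0} (1/2^6)^n · ((1/2)_n)^7 / ((1)_n)^7 · (168n³ + 76n² + 14n + 1) = 32/π³ holds. -/
/-!
Up to a constant factor, the terms of index `2n` and `2n + 1` of the series add up to the value at
`x = 1/4` of an entire function `x ↦ summand n x`. A Wilf–Zeilberger certificate telescopes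
`summand n x + summand n (x + 1)`, so that `F = ∑ summand n` satisfies `F (x + 1) = -F x`. At
`x = 1/2` the summand of index `0` vanishes to order `3` and all others to order at least `7`, so
`F x / cos³ (πx)` tends to the explicit limit `2 / π⁴` there. In the strip `|Re x| ≤ 1/2` the
function `F` is `O(exp (4π|Im x|))`. Hence `F x / cos³ (πx)` is entire, of period `1` and
`O(exp (π|Im x|))`; such a function is constant, so `F x = 2 / π⁴ * cos³ (πx)`, and `x = 1/4`
gives the sum of the series.
-/

section

open Complex Filter Topology
open scoped Real

section RemovableQuotient

/-- The quotient `f / g` continued by l'Hôpital's rule to the zeros of `g`; it is the holomorphic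
quotient when these zeros are simple and also zeros of `f`. -/
noncomputable def removableQuotient (f g : ℂ → ℂ) (x : ℂ) : ℂ :=
  if g x = 0 then deriv f x / deriv g x else f x / g x

variable {f g : ℂ → ℂ}

lemma mul_removableQuotient {x : ℂ} (h : g x = 0 → f x = 0) :
    g x * removableQuotient f g x = f x := by
  by_cases hx : g x = 0
  · rw [hx, zero_mul, h hx]
  · rw [removableQuotient, if_neg hx, mul_div_cancel₀ _ hx]

lemma differentiable_dslope (hf : Differentiable ℂ f) (a : ℂ) : Differentiable ℂ (dslope f a) :=
  differentiableOn_univ.mp ((Complex.differentiableOn_dslope univ_mem).mpr hf.differentiableOn)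

lemma differentiable_removableQuotient (hf : Differentiable ℂ f) (hg : Differentiable ℂ g)
    (hfg : ∀ x, g x = 0 → f x = 0) (hg' : ∀ x, g x = 0 → deriv g x ≠ 0) :
    Differentiable ℂ (removableQuotient f g) := by
  intro a
  by_cases ha : g a = 0
  · have hga : dslope g a a ≠ 0 := by
      rw [dslope_same]
      exact hg' a ha
    refine ((differentiable_dslope hf a a).div (differentiable_dslope hg a a) hga)
      |>.congr_of_eventuallyEq ?_
    filter_upwards [(differentiable_dslope hg a).continuous.continuousAt.eventually_ne hga]
      with x hx
    rcases eq_or_ne x a with rfl | hxa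
    · simp only [removableQuotient, if_pos ha, Pi.div_apply, dslope_same]
    · have hsub : x - a ≠ 0 := sub_ne_zero.mpr hxa
      have hfx : f x = (x - a) * dslope f a x := by
        simpa [hfg a ha] using (sub_smul_dslope f a x).symm
      have hgx : g x = (x - a) * dslope g a x := by
        simpa [ha] using (sub_smul_dslope g a x).symm
      have hgx0 : g x ≠ 0 := hgx ▸ mul_ne_zero hsub hx
      rw [removableQuotient, if_neg hgx0, hfx, hgx, mul_div_mul_left _ _ hsub, Pi.div_apply]
  · refine ((hf a).div (hg a) ha).congr_of_eventuallyEq ?_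
    filter_upwards [hg.continuous.continuousAt.eventually_ne ha] with x hx
    exact if_neg hx

lemma deriv_add_eq_mul {a s : ℂ} (hf : ∀ x, f (x + a) = s * f x) (x : ℂ) :
    deriv f (x + a) = s * deriv f x := by
  rw [← deriv_comp_add_const, ← deriv_const_mul_field]
  exact congrArg (deriv · x) (funext hf)

lemma removableQuotient_add {a s t : ℂ} (ht : t ≠ 0) (hf : ∀ x, f (x + a) = s * f x)
    (hg : ∀ x, g (x + a) = t * g x) (x : ℂ) :
    removableQuotient f g (x + a) = s / t * removableQuotient f g x := by
  simp only [removableQuotient, hf, hg, deriv_add_eq_mul hf, deriv_add_eq_mul hg, mul_eq_zero, ht,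
    false_or]
  split_ifs <;> rw [mul_div_mul_comm]

end RemovableQuotient

section CosPi

/-- The entire function `x ↦ cos (π x)`. -/
noncomputable def cosPi (x : ℂ) : ℂ := cos (π * x)

lemma hasDerivAt_cosPi (x : ℂ) : HasDerivAt cosPi (-sin (π * x) * π) x := by
  have h := ((hasDerivAt_id x).const_mul (π : ℂ)).ccos
  rwa [mul_one] at h

lemma differentiable_cosPi : Differentiable ℂ cosPi := fun x =>
  (hasDerivAt_cosPi x).differentiableAt

lemma cosPi_add_one (x : ℂ) : cosPi (x + 1) = -1 * cosPi x := by
  rw [cosPi, mul_add, mul_one, cos_add_pi, neg_one_mul, cosPi]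

lemma cosPi_half : cosPi (1 / 2) = 0 := by
  rw [cosPi, mul_one_div, cos_pi_div_two]

lemma hasDerivAt_cosPi_half : HasDerivAt cosPi (-π) (1 / 2) := by
  have h := hasDerivAt_cosPi (1 / 2)
  rwa [mul_one_div, sin_pi_div_two, neg_one_mul] at h

lemma exists_eq_half_add_int_of_cosPi_eq_zero {x : ℂ} (hx : cosPi x = 0) :
    ∃ k : ℤ, x = 1 / 2 + k := by
  obtain ⟨k, hk⟩ := cos_eq_zero_iff.mp hx
  have hπ : (π : ℂ) ≠ 0 := ofReal_ne_zero.mpr Real.pi_ne_zero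
  exact ⟨k, mul_left_cancel₀ hπ (by rw [hk]; ring)⟩

lemma deriv_cosPi_ne_zero {x : ℂ} (hx : cosPi x = 0) : deriv cosPi x ≠ 0 := by
  have hsin : sin (π * x) ≠ 0 := fun h => by
    simpa [show cos (π * x) = 0 from hx, h] using sin_sq_add_cos_sq (π * x)
  simp [(hasDerivAt_cosPi x).deriv, hsin]

lemma eventually_cosPi_ne_zero : ∀ᶠ x in 𝓝[≠] (1 / 2 : ℂ), cosPi x ≠ 0 :=
  hasDerivAt_cosPi_half.eventually_ne (by simp)

lemma tendsto_cosPi_pow_half {k : ℕ} (hk : k ≠ 0) :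
    Tendsto (fun x => cosPi x ^ k) (𝓝[≠] (1 / 2)) (𝓝 0) := by
  have h := (differentiable_cosPi.continuous.tendsto (1 / 2)).pow k
  rw [cosPi_half, zero_pow hk] at h
  exact h.mono_left nhdsWithin_le_nhds

lemma tendsto_div_cosPi_half :
    Tendsto (fun x : ℂ => (1 / 4 - x ^ 2) / cosPi x) (𝓝[≠] (1 / 2)) (𝓝 (1 / (π : ℂ))) := by
  have hslope : Tendsto (fun x : ℂ => cosPi x / (x - 1 / 2)) (𝓝[≠] (1 / 2)) (𝓝 (-π)) := by
    have h := hasDerivAt_cosPi_half.tendsto_slope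
    simpa only [slope_fun_def_field, cosPi_half, sub_zero] using h
  have hlin : Tendsto (fun x : ℂ => -(x + 1 / 2)) (𝓝[≠] (1 / 2)) (𝓝 (-1)) := by
    have hcont : Continuous fun x : ℂ => -(x + 1 / 2) := by fun_prop
    convert (hcont.tendsto (1 / 2)).mono_left nhdsWithin_le_nhds using 2
    norm_num
  have h := hlin.div hslope (by simp)
  rw [neg_div_neg_eq] at h
  refine h.congr fun x => ?_
  rw [Pi.div_apply, div_div_eq_mul_div]
  ring

end CosPi

section Strip

/-- Growth `O(exp (a |Im x|))` in the two ends `1 ≤ |Im x|` of the strip `|Re x| ≤ 1 / 2`. -/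
def StripGrowth {E : Type*} [Norm E] (f : ℂ → E) (a : ℝ) : Prop :=
  ∃ C : ℝ, ∀ x : ℂ, |x.re| ≤ 1 / 2 → 1 ≤ |x.im| → ‖f x‖ ≤ C * Real.exp (a * |x.im|)

lemma norm_exp_mul_I (z : ℂ) : ‖exp (z * I)‖ = Real.exp (-z.im) := by
  rw [norm_exp, mul_I_re]

lemma norm_sin_le_exp (z : ℂ) : ‖sin z‖ ≤ Real.exp |z.im| := by
  have hneg : ‖exp (-z * I)‖ ≤ Real.exp |z.im| := by
    rw [norm_exp_mul_I, neg_im, neg_neg]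
    exact Real.exp_le_exp.mpr (le_abs_self _)
  have hpos : ‖exp (z * I)‖ ≤ Real.exp |z.im| := by
    rw [norm_exp_mul_I]
    exact Real.exp_le_exp.mpr (neg_le_abs _)
  rw [sin, norm_div, norm_mul, norm_I, mul_one, norm_ofNat, div_le_iff₀ two_pos]
  linarith [norm_sub_le (exp (-z * I)) (exp (z * I))]

lemma exp_sub_exp_neg_le_norm_cos (z : ℂ) :
    Real.exp |z.im| - Real.exp (-|z.im|) ≤ 2 * ‖cos z‖ := by
  have hcos : exp (z * I) - -exp (-z * I) = 2 * cos z := by rw [cos]; ring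
  have h := abs_norm_sub_norm_le (exp (z * I)) (-exp (-z * I))
  rw [hcos, norm_neg, norm_exp_mul_I, norm_exp_mul_I, neg_im, neg_neg, norm_mul, norm_ofNat] at h
  refine le_trans ?_ h
  rcases abs_cases z.im with ⟨hz, -⟩ | ⟨hz, -⟩ <;> rw [hz]
  · exact (le_abs_self _).trans_eq (abs_sub_comm _ _)
  · rw [neg_neg]
    exact le_abs_self _

lemma exp_le_four_mul_norm_cos {z : ℂ} (hz : 1 ≤ |z.im|) :
    Real.exp |z.im| ≤ 4 * ‖cos z‖ := by
  have hexp : Real.exp (-|z.im|) ≤ Real.exp |z.im| / 2 := by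
    have htwo : 2 ≤ Real.exp |z.im| := by linarith [Real.add_one_le_exp |z.im|]
    have hmul : Real.exp (-|z.im|) * Real.exp |z.im| = 1 := by
      rw [← Real.exp_add, neg_add_cancel, Real.exp_zero]
    nlinarith [Real.exp_pos (-|z.im|)]
  linarith [exp_sub_exp_neg_le_norm_cos z]

lemma abs_im_pi_mul (x : ℂ) : |((π : ℂ) * x).im| = π * |x.im| := by
  rw [im_ofReal_mul, abs_mul, abs_of_pos Real.pi_pos]

lemma exp_pi_mul_le_four_mul_norm_cosPi {x : ℂ} (hx : 1 ≤ |x.im|) :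
    Real.exp (π * |x.im|) ≤ 4 * ‖cosPi x‖ := by
  rw [← abs_im_pi_mul]
  refine exp_le_four_mul_norm_cos ?_
  rw [abs_im_pi_mul]
  nlinarith [Real.pi_gt_three]

lemma StripGrowth.sub_const {f : ℂ → ℂ} {a : ℝ} (hf : StripGrowth f a) (ha : 0 ≤ a) (c : ℂ) :
    StripGrowth (fun x => f x - c) a := by
  obtain ⟨C, hC⟩ := hf
  refine ⟨C + ‖c‖, fun x hre him => (norm_sub_le _ _).trans ?_⟩
  rw [add_mul]
  refine add_le_add (hC x hre him) (le_mul_of_one_le_right (norm_nonneg _) ?_)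
  exact Real.one_le_exp (by positivity)

lemma StripGrowth.removableQuotient_cosPi {f : ℂ → ℂ} {a : ℝ} (hf : StripGrowth f a) :
    StripGrowth (removableQuotient f cosPi) (a - π) := by
  obtain ⟨C, hC⟩ := hf
  refine ⟨4 * C, fun x hre him => ?_⟩
  have hexp := exp_pi_mul_le_four_mul_norm_cosPi him
  have hcos : 0 < ‖cosPi x‖ := by linarith [Real.exp_pos (π * |x.im|)]
  have hnonneg : 0 ≤ C * Real.exp (a * |x.im|) := (norm_nonneg _).trans (hC x hre him)
  rw [removableQuotient, if_neg (norm_pos_iff.mp hcos), norm_div, div_le_iff₀ hcos, sub_mul,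
    Real.exp_sub]
  calc ‖f x‖ ≤ C * Real.exp (a * |x.im|) := hC x hre him
    _ ≤ C * Real.exp (a * |x.im|) * (4 * ‖cosPi x‖ / Real.exp (π * |x.im|)) :=
      le_mul_of_one_le_right hnonneg ((one_le_div (Real.exp_pos _)).mpr hexp)
    _ = _ := by ring

lemma stripGrowth_one_add_norm_pow (k : ℕ) {ε : ℝ} (hε : 0 < ε) :
    StripGrowth (fun x : ℂ => (1 + ‖x‖) ^ k) ε := by
  refine ⟨k.factorial * (3 / ε) ^ k, fun x hre him => ?_⟩
  have hlin : 1 + ‖x‖ ≤ 3 / ε * (ε * |x.im|) := by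
    have hcancel : 3 / ε * (ε * |x.im|) = 3 * |x.im| := by field_simp
    linarith [norm_le_abs_re_add_abs_im x]
  have hexp := Real.pow_div_factorial_le_exp (ε * |x.im|) (by positivity) k
  rw [div_le_iff₀ (by positivity)] at hexp
  rw [Real.norm_of_nonneg (by positivity)]
  calc (1 + ‖x‖) ^ k ≤ (3 / ε * (ε * |x.im|)) ^ k := by gcongr
    _ = (3 / ε) ^ k * (ε * |x.im|) ^ k := mul_pow _ _ _
    _ ≤ (3 / ε) ^ k * (Real.exp (ε * |x.im|) * k.factorial) := by gcongr
    _ = _ := by ring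

lemma tendsto_zero_of_tendsto_div {α G : Type*} [GroupWithZero G] [TopologicalSpace G]
    [ContinuousMul G] {l : Filter α} {f g : α → G} {c : G}
    (h : Tendsto (fun x => f x / g x) l (𝓝 c)) (hg : Tendsto g l (𝓝 0))
    (hne : ∀ᶠ x in l, g x ≠ 0) : Tendsto f l (𝓝 0) := by
  rw [← mul_zero c]
  refine (h.mul hg).congr' ?_
  filter_upwards [hne] with x hx
  exact div_mul_cancel₀ _ hx

lemma eq_zero_of_cosPi_eq_zero {f : ℂ → ℂ} (hper : Function.Periodic (‖f ·‖) 1)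
    (hf : f (1 / 2) = 0) {x : ℂ} (hx : cosPi x = 0) : f x = 0 := by
  obtain ⟨k, rfl⟩ := exists_eq_half_add_int_of_cosPi_eq_zero hx
  have h := hper.int_mul k (1 / 2)
  rwa [mul_one, hf, norm_zero, norm_eq_zero] at h

lemma isBounded_range_of_stripGrowth_zero {f : ℂ → ℂ} (hf : Continuous f)
    (hper : Function.Periodic (‖f ·‖) 1) (hgrowth : StripGrowth f 0) :
    Bornology.IsBounded (Set.range f) := by
  obtain ⟨C, hC⟩ := hgrowth
  obtain ⟨D, hD⟩ := (isCompact_closedBall (0 : ℂ) 2).exists_bound_of_continuousOn hf.continuousOn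
  have hstrip : ∀ x : ℂ, |x.re| ≤ 1 / 2 → ‖f x‖ ≤ max C D := fun x hre => by
    rcases le_or_gt 1 |x.im| with him | him
    · exact le_max_of_le_left (by simpa using hC x hre him)
    · refine le_max_of_le_right (hD x ?_)
      rw [mem_closedBall_zero_iff]
      linarith [norm_le_abs_re_add_abs_im x]
  refine isBounded_iff_forall_norm_le.mpr ⟨max C D, ?_⟩
  rintro _ ⟨x, rfl⟩
  rw [← hper.sub_zsmul_eq (x := x) (round x.re)]
  exact hstrip _ (by simpa using abs_sub_round x.re)

lemma periodic_norm_of_forall_add_one {f : ℂ → ℂ} {k : ℕ}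
    (hf : ∀ x, f (x + 1) = (-1) ^ k * f x) : Function.Periodic (‖f ·‖) 1 := fun x => by
  simp [hf]

lemma eq_const_of_periodic_of_stripGrowth {f : ℂ → ℂ} (hf : Differentiable ℂ f)
    (hper : Function.Periodic f 1) (hgrowth : StripGrowth f π) (x : ℂ) : f x = f (1 / 2) := by
  let h : ℂ → ℂ := fun y => f y - f (1 / 2)
  let q : ℂ → ℂ := removableQuotient h cosPi
  have hh : Differentiable ℂ h := hf.sub_const _
  have hh_add : ∀ y, h (y + 1) = 1 * h y := fun y => by simp only [h, hper y, one_mul]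
  have hh_zero : ∀ y, cosPi y = 0 → h y = 0 := fun y =>
    eq_zero_of_cosPi_eq_zero (fun z => congrArg norm ((hh_add z).trans (one_mul _))) (sub_self _)
  have hq : Differentiable ℂ q := differentiable_removableQuotient hh differentiable_cosPi hh_zero
    fun y => deriv_cosPi_ne_zero
  have hq_add : ∀ y, q (y + 1) = -q y := fun y => by
    rw [← neg_one_mul, ← one_div_neg_one_eq_neg_one]
    exact removableQuotient_add (neg_ne_zero.mpr one_ne_zero) hh_add cosPi_add_one y
  have hq_growth : StripGrowth q 0 := by
    have hquot := (hgrowth.sub_const Real.pi_pos.le (f (1 / 2))).removableQuotient_cosPi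
    rwa [sub_self] at hquot
  have hq_zero : q x = 0 := by
    have hbdd := isBounded_range_of_stripGrowth_zero hq.continuous
      (fun y => by simp only [hq_add, norm_neg]) hq_growth
    exact self_eq_neg.mp ((hq.apply_eq_apply_of_bounded hbdd x (x + 1)).trans (hq_add x))
  rw [← sub_eq_zero]
  calc h x = cosPi x * q x := (mul_removableQuotient (hh_zero x)).symm
    _ = 0 := by rw [hq_zero, mul_zero]

/-- Dividing by `cosPi` lowers the exponential type by `π`, and an entire function of period `1`
and type below `2π` is constant. -/
theorem eq_mul_cosPi_pow (k : ℕ) {f : ℂ → ℂ} {c : ℂ} (hf : Differentiable ℂ f)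
    (hadd : ∀ x, f (x + 1) = (-1) ^ k * f x)
    (hlim : Tendsto (fun x => f x / cosPi x ^ k) (𝓝[≠] (1 / 2)) (𝓝 c))
    (hgrowth : StripGrowth f ((k + 1) * π)) (x : ℂ) : f x = c * cosPi x ^ k := by
  have hval : Tendsto f (𝓝[≠] (1 / 2)) (𝓝 (f (1 / 2))) :=
    (hf.continuous.tendsto _).mono_left nhdsWithin_le_nhds
  induction k generalizing f with
  | zero =>
    have hc : f (1 / 2) = c := tendsto_nhds_unique hval (by simpa using hlim)
    rw [pow_zero, mul_one, ← hc]
    exact eq_const_of_periodic_of_stripGrowth hf (fun y => by simpa using hadd y)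
      (by simpa using hgrowth) x
  | succ k ih =>
    have hhalf : f (1 / 2) = 0 := tendsto_nhds_unique hval <|
      tendsto_zero_of_tendsto_div hlim (tendsto_cosPi_pow_half k.succ_ne_zero) <|
        eventually_cosPi_ne_zero.mono fun y => pow_ne_zero _
    have hzero : ∀ y, cosPi y = 0 → f y = 0 := fun y =>
      eq_zero_of_cosPi_eq_zero (periodic_norm_of_forall_add_one hadd) hhalf
    have hq := differentiable_removableQuotient hf differentiable_cosPi hzero
      fun y => deriv_cosPi_ne_zero
    have hq_eq := ih hq
      (fun y => by
        rw [removableQuotient_add (neg_ne_zero.mpr one_ne_zero) hadd cosPi_add_one, pow_succ]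
        ring)
      (by
        refine hlim.congr' ?_
        filter_upwards [eventually_cosPi_ne_zero] with y hy
        rw [removableQuotient, if_neg hy, div_div, pow_succ'])
      (by
        convert hgrowth.removableQuotient_cosPi using 1
        push_cast
        ring)
      ((hq.continuous.tendsto _).mono_left nhdsWithin_le_nhds)
    rw [← mul_removableQuotient (hzero x), hq_eq]
    ring

end Strip

section Geometric

lemma exists_norm_le_mul_pow_of_eventually_norm_succ_le {X E : Type*} [TopologicalSpace X]
    [SeminormedAddCommGroup E] {K : Set X} (hK : IsCompact K) {f : ℕ → X → E}
    (hf : ∀ n, ContinuousOn (f n) K) {r : ℝ} (hr : 0 < r)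
    (h : ∀ᶠ n in atTop, ∀ x ∈ K, ‖f (n + 1) x‖ ≤ r * ‖f n x‖) :
    ∃ C : ℝ, 0 ≤ C ∧ ∀ n, ∀ x ∈ K, ‖f n x‖ ≤ C * r ^ n := by
  choose B hB using fun n => hK.exists_bound_of_continuousOn (hf n)
  obtain ⟨N, hN⟩ := eventually_atTop.mp h
  obtain ⟨M, hM⟩ := ((Finset.range (N + 1)).image fun i => B i / r ^ i).exists_le
  have hinit : ∀ n ≤ N, ∀ x ∈ K, ‖f n x‖ ≤ max 0 M * r ^ n := fun n hn x hx => by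
    have hBn : B n / r ^ n ≤ M :=
      hM _ (Finset.mem_image_of_mem _ (Finset.mem_range.mpr (Nat.lt_succ_of_le hn)))
    exact (hB n x hx).trans ((div_le_iff₀ (pow_pos hr n)).mp (hBn.trans (le_max_right _ _)))
  refine ⟨max 0 M, le_max_left _ _, fun n x hx => ?_⟩
  rcases le_total n N with hn | hn
  · exact hinit n hn x hx
  · induction n, hn using Nat.le_induction with
    | base => exact hinit N le_rfl x hx
    | succ n hn ih =>
      calc ‖f (n + 1) x‖ ≤ r * ‖f n x‖ := hN n hn x hx
        _ ≤ r * (max 0 M * r ^ n) := by gcongr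
        _ = _ := by ring

lemma one_add_norm_natCast_prodMk_le {E : Type*} [SeminormedAddCommGroup E] (n : ℕ) (x : E) :
    1 + ‖((n : ℂ), x)‖ ≤ (n + 1) * (1 + ‖x‖) := by
  have hn : (0 : ℝ) ≤ n := n.cast_nonneg
  have hsum : ‖((n : ℂ), x)‖ ≤ n + ‖x‖ := by
    rw [norm_prod_le_iff, norm_natCast]
    exact ⟨le_add_of_nonneg_right (norm_nonneg x), le_add_of_nonneg_left hn⟩
  nlinarith [mul_nonneg hn (norm_nonneg x)]

lemma exists_summable_bound_of_hasTemperateGrowth {E F : Type*} [NormedAddCommGroup E]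
    [NormedSpace ℝ E] [NormedAddCommGroup F] [NormedSpace ℝ F] {f : ℂ × E → F}
    (hf : f.HasTemperateGrowth) {r : ℝ} (hr : 0 < r) (hr' : r < 1) :
    ∃ (k : ℕ) (u : ℕ → ℝ), Summable u ∧ (∀ n, 0 ≤ u n) ∧
      ∀ (n : ℕ) (x : E), ‖f (n, x)‖ * r ^ n ≤ (1 + ‖x‖) ^ k * u n := by
  obtain ⟨k, C, hC⟩ := hf.2 0
  have hC0 : 0 ≤ C := by simpa using (norm_nonneg _).trans (hC 0)
  have hgeom : Summable fun n : ℕ => ((n : ℝ) + 1) ^ k * r ^ n := by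
    have h := (summable_nat_add_iff 1).mpr (summable_pow_mul_geometric_of_norm_lt_one (R := ℝ) k
      (by rwa [Real.norm_of_nonneg hr.le]))
    refine (h.mul_left r⁻¹).congr fun n => ?_
    push_cast
    field_simp
    ring
  refine ⟨k, fun n => C * ((n + 1) ^ k * r ^ n), hgeom.mul_left C, fun n => by positivity,
    fun n x => ?_⟩
  calc ‖f (n, x)‖ * r ^ n
      ≤ C * (1 + ‖((n : ℂ), x)‖) ^ k * r ^ n := by
        gcongr
        simpa only [norm_iteratedFDeriv_zero] using hC (n, x)
    _ ≤ C * ((n + 1) * (1 + ‖x‖)) ^ k * r ^ n := by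
        gcongr
        exact one_add_norm_natCast_prodMk_le n x
    _ = _ := by
        rw [mul_pow]
        ring

@[fun_prop]
lemma hasTemperateGrowth_fst {E F : Type*} [NormedAddCommGroup E] [NormedSpace ℝ E]
    [NormedAddCommGroup F] [NormedSpace ℝ F] :
    (Prod.fst : E × F → E).HasTemperateGrowth :=
  (ContinuousLinearMap.fst ℝ E F).hasTemperateGrowth

@[fun_prop]
lemma hasTemperateGrowth_snd {E F : Type*} [NormedAddCommGroup E] [NormedSpace ℝ E]
    [NormedAddCommGroup F] [NormedSpace ℝ F] :
    (Prod.snd : E × F → F).HasTemperateGrowth :=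
  (ContinuousLinearMap.snd ℝ E F).hasTemperateGrowth

end Geometric

namespace Gourevich

section Definitions

/-- The coefficient `(1/2)_{2n} / (2n + 1)!⁷`. -/
noncomputable def coeff (n : ℕ) : ℝ :=
  risingFactorial (1 / 2) (2 * n) / ((2 * n + 1).factorial : ℝ) ^ 7

/-- The product `(1/2 + x)ₙ (1/2 - x)ₙ`. -/
noncomputable def halfProd (n : ℕ) (x : ℂ) : ℂ :=
  ∏ j ∈ Finset.range n, (((j : ℂ) + 1 / 2) ^ 2 - x ^ 2)

/-- The entire function `1 / (Γ(n + 1 + x) Γ(n + 1 - x))`; at the poles of a Gamma factor,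
`Gamma = 0` in Lean and the value `0⁻¹ = 0` is the intended one. -/
noncomputable def invGamma (n : ℕ) (x : ℂ) : ℂ :=
  (Gamma (n + 1 + x))⁻¹ * (Gamma (n + 1 - x))⁻¹

/-- The entire function `1 / (Γ(n + 2 + x) Γ(n + 1 - x))`, the common part of `invGamma n x` and
`invGamma n (x + 1)`. -/
noncomputable def invGammaShift (n : ℕ) (x : ℂ) : ℂ :=
  (Gamma (n + 2 + x))⁻¹ * (Gamma (n + 1 - x))⁻¹

/-- The hypergeometric factor of the summand of `interpolant`. -/
noncomputable def weight (n : ℕ) (x : ℂ) : ℂ :=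
  coeff n * halfProd n x ^ 7 * invGamma n x

/-- The polynomial factor of the summand of `interpolant`, found by solving `numPoly_telescope`
among the polynomials in `n` and `x` that are even in `x`. -/
noncomputable def numPoly (n x : ℂ) : ℂ :=
  let r := 2 * n
  let s := 2 * n + 1
  let e := (n + 1 / 2) ^ 2 - x ^ 2
  (r + s) * (e ^ 3 * (e ^ 2 + s ^ 2 * e + s ^ 4) + r ^ 3 * s ^ 7) +
    2 * r * s ^ 6 * e * (e + r * s)

/-- The summand of `interpolant`. -/
noncomputable def summand (n : ℕ) (x : ℂ) : ℂ :=
  numPoly n x * weight n x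

/-- The entire function whose value at `1 / 4` is a multiple of the Gourevich series; its `n`-th
summand there collects the terms of index `2n` and `2n + 1`. -/
noncomputable def interpolant (x : ℂ) : ℂ := ∑' n, summand n x

/-- The Wilf–Zeilberger certificate: the partial sums of `summand n x + summand n (x + 1)`. -/
noncomputable def certificate (n : ℕ) (x : ℂ) : ℂ :=
  (4 * n + 1) * (4 * n + 3) * coeff n * halfProd n x ^ 7 * (n + 1 / 2 + x) ^ 7 * (x + 1 / 2) *
    ((n + 1) ^ 2 + 3 * (x + 1 / 2) ^ 2) * invGammaShift n x

end Definitions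

section Telescoping

lemma risingFactorial_succ (a : ℝ) (n : ℕ) :
    risingFactorial a (n + 1) = risingFactorial a n * (a + n) :=
  Finset.prod_range_succ _ _

lemma coeff_mul_eq_coeff_succ_mul (n : ℕ) :
    (coeff n : ℂ) * ((4 * n + 1) * (4 * n + 3)) =
      4 * coeff (n + 1) * ((2 * n + 2) * (2 * n + 3)) ^ 7 := by
  have h : coeff n * ((4 * n + 1) * (4 * n + 3)) =
      4 * coeff (n + 1) * ((2 * n + 2) * (2 * n + 3)) ^ 7 := by
    rw [coeff, coeff, mul_add_one, risingFactorial_succ, risingFactorial_succ,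
      Nat.factorial_succ (2 * n + 1 + 1), Nat.factorial_succ (2 * n + 1)]
    push_cast
    field_simp
    ring
  exact_mod_cast congrArg ofReal h

lemma coeff_zero : coeff 0 = 1 := by simp [coeff, risingFactorial]

lemma halfProd_zero (x : ℂ) : halfProd 0 x = 1 := Finset.prod_range_zero _

lemma halfProd_succ (n : ℕ) (x : ℂ) :
    halfProd (n + 1) x = halfProd n x * (((n : ℂ) + 1 / 2) ^ 2 - x ^ 2) :=
  Finset.prod_range_succ _ _

lemma halfProd_succ_add_one (n : ℕ) (x : ℂ) :
    halfProd (n + 1) (x + 1) = -halfProd n x * (n + 1 / 2 + x) * (n + 3 / 2 + x) := by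
  induction n with
  | zero =>
    rw [halfProd_succ, halfProd_zero, halfProd_zero, Nat.cast_zero]
    ring
  | succ n ih =>
    rw [halfProd_succ (n + 1), ih, halfProd_succ n]
    push_cast
    ring

lemma inv_Gamma_eq_mul {s t : ℂ} (h : t = s + 1) : (Gamma s)⁻¹ = s * (Gamma t)⁻¹ := by
  simpa only [one_div, h] using one_div_Gamma_eq_self_mul_one_div_Gamma_add_one s

lemma invGamma_eq_mul_invGamma_succ (n : ℕ) (x : ℂ) :
    invGamma n x = (((n : ℂ) + 1) ^ 2 - x ^ 2) * invGamma (n + 1) x := by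
  rw [invGamma, invGamma, Nat.cast_add_one,
    inv_Gamma_eq_mul (s := n + 1 + x) (t := n + 1 + 1 + x) (by ring),
    inv_Gamma_eq_mul (s := n + 1 - x) (t := n + 1 + 1 - x) (by ring)]
  ring

lemma invGamma_eq_mul_invGammaShift (n : ℕ) (x : ℂ) :
    invGamma n x = (n + 1 + x) * invGammaShift n x := by
  rw [invGamma, invGammaShift, inv_Gamma_eq_mul (s := n + 1 + x) (t := n + 2 + x) (by ring)]
  ring

lemma invGamma_add_one (n : ℕ) (x : ℂ) :
    invGamma n (x + 1) = (n - x) * invGammaShift n x := by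
  rw [invGamma, invGammaShift,
    inv_Gamma_eq_mul (s := n + 1 - (x + 1)) (t := n + 1 - x) (by ring),
    show (n : ℂ) + 1 + (x + 1) = n + 2 + x by ring]
  ring

lemma invGammaShift_eq_mul_invGammaShift_succ (n : ℕ) (x : ℂ) :
    invGammaShift n x = (n + 2 + x) * (n + 1 - x) * invGammaShift (n + 1) x := by
  rw [invGammaShift, invGammaShift, Nat.cast_add_one,
    inv_Gamma_eq_mul (s := n + 2 + x) (t := n + 1 + 2 + x) (by ring),
    inv_Gamma_eq_mul (s := n + 1 - x) (t := n + 1 + 1 - x) (by ring)]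
  ring

lemma numPoly_telescope (n x : ℂ) :
    numPoly n x * (n - 1 / 2 - x) ^ 7 * (n + 1 + x) -
        numPoly n (x + 1) * (n + 1 / 2 + x) ^ 7 * (n - x) =
      (4 * n + 1) * (4 * n + 3) * (n + 1 / 2 + x) ^ 7 * (n - 1 / 2 - x) ^ 7 *
          (x + 1 / 2) * ((n + 1) ^ 2 + 3 * (x + 1 / 2) ^ 2) -
        4 * (2 * n * (2 * n + 1)) ^ 7 * (x + 1 / 2) * (n ^ 2 + 3 * (x + 1 / 2) ^ 2) *
          (n + 1 + x) * (n - x) := by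
  simp only [numPoly]
  ring

lemma summand_zero_add (x : ℂ) : summand 0 x + summand 0 (x + 1) = certificate 0 x := by
  simp only [summand, weight, certificate, invGamma_add_one, invGamma_eq_mul_invGammaShift _ x,
    numPoly, halfProd_zero, Nat.cast_zero]
  ring

lemma certificate_eq_mul_coeff_succ (n : ℕ) (x : ℂ) :
    certificate n x = 4 * coeff (n + 1) * ((2 * n + 2) * (2 * n + 3)) ^ 7 * halfProd n x ^ 7 *
      (n + 1 / 2 + x) ^ 7 * (x + 1 / 2) * ((n + 1) ^ 2 + 3 * (x + 1 / 2) ^ 2) *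
      ((n + 2 + x) * (n + 1 - x) * invGammaShift (n + 1) x) := by
  rw [← coeff_mul_eq_coeff_succ_mul, ← invGammaShift_eq_mul_invGammaShift_succ, certificate]
  ring

lemma summand_succ_add (n : ℕ) (x : ℂ) :
    summand (n + 1) x + summand (n + 1) (x + 1) = certificate (n + 1) x - certificate n x := by
  rw [certificate_eq_mul_coeff_succ n]
  have h := numPoly_telescope (n + 1) x
  simp only [summand, weight, certificate, invGamma_add_one, invGamma_eq_mul_invGammaShift _ x,
    halfProd_succ n x, halfProd_succ_add_one, Nat.cast_add_one, sq_sub_sq ((n : ℂ) + 1 / 2)]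
  rw [show (n : ℂ) + 1 - 1 / 2 - x = n + 1 / 2 - x by ring] at h
  rw [show (n : ℂ) + 1 + 1 / 2 + x = n + 3 / 2 + x by ring] at h ⊢
  generalize (n : ℂ) + 1 / 2 - x = a, (n : ℂ) + 1 / 2 + x = b, (n : ℂ) + 3 / 2 + x = c at h ⊢
  linear_combination (coeff (n + 1) : ℂ) * halfProd n x ^ 7 * b ^ 7 * invGammaShift (n + 1) x * h

lemma sum_summand_add (n : ℕ) (x : ℂ) :
    ∑ i ∈ Finset.range (n + 1), (summand i x + summand i (x + 1)) = certificate n x := by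
  simp only [Finset.sum_range_succ', summand_succ_add, summand_zero_add]
  rw [Finset.sum_range_sub (certificate · x), sub_add_cancel]

end Telescoping

section Convergence

lemma differentiable_invGamma (n : ℕ) : Differentiable ℂ (invGamma n) := by
  have h : Differentiable ℂ fun s => (Gamma s)⁻¹ := differentiable_one_div_Gamma
  exact (h.comp (by fun_prop)).mul (h.comp (by fun_prop))

lemma differentiable_halfProd (n : ℕ) : Differentiable ℂ (halfProd n) := by
  unfold halfProd
  fun_prop

lemma differentiable_weight (n : ℕ) : Differentiable ℂ (weight n) :=
  (((differentiable_halfProd n).pow 7).const_mul _).mul (differentiable_invGamma n)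

lemma differentiable_summand (n : ℕ) : Differentiable ℂ (summand n) := by
  have hpoly : Differentiable ℂ (numPoly n) := by
    unfold numPoly
    fun_prop
  exact hpoly.mul (differentiable_weight n)

lemma weight_succ_mul (n : ℕ) (x : ℂ) :
    weight (n + 1) x * (((n : ℂ) + 1) ^ 2 - x ^ 2) * (4 * ((2 * n + 2) * (2 * n + 3)) ^ 7 : ℕ) =
      ((4 * n + 1) * (4 * n + 3) : ℕ) * (((n : ℂ) + 1 / 2) ^ 2 - x ^ 2) ^ 7 * weight n x := by
  rw [weight, weight, halfProd_succ, invGamma_eq_mul_invGamma_succ n]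
  push_cast
  linear_combination -halfProd n x ^ 7 * (((n : ℂ) + 1 / 2) ^ 2 - x ^ 2) ^ 7 *
    ((((n : ℂ) + 1) ^ 2 - x ^ 2) * invGamma (n + 1) x) * coeff_mul_eq_coeff_succ_mul n

lemma le_norm_natCast_sq_sub_sq {n : ℕ} {x : ℂ} (hx : ‖x‖ ^ 2 ≤ 9 / 16 * (n + 1)) :
    7 / 16 * ((n : ℝ) + 1) ^ 2 ≤ ‖((n : ℂ) + 1) ^ 2 - x ^ 2‖ := by
  have h := norm_sub_norm_le (((n : ℂ) + 1) ^ 2) (x ^ 2)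
  rw [norm_pow, norm_pow, ← Nat.cast_add_one, norm_natCast] at h
  push_cast at h
  nlinarith [n.cast_nonneg (α := ℝ)]

lemma natCast_add_half (n : ℕ) : (n : ℂ) + 1 / 2 = (n + 1 / 2 : ℝ) := by
  push_cast
  rfl

lemma norm_natCast_add_half_sq_sub_sq_le {n : ℕ} {x : ℂ} (hx : ‖x‖ ^ 2 ≤ 9 / 16 * (n + 1)) :
    ‖((n : ℂ) + 1 / 2) ^ 2 - x ^ 2‖ ≤ ((n : ℝ) + 1) ^ 2 := by
  have hhalf : ‖(n : ℂ) + 1 / 2‖ = n + 1 / 2 := by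
    rw [natCast_add_half, Complex.norm_of_nonneg (by positivity)]
  have h := norm_sub_le (((n : ℂ) + 1 / 2) ^ 2) (x ^ 2)
  rw [norm_pow, norm_pow, hhalf] at h
  nlinarith

lemma norm_weight_succ_le {n : ℕ} {x : ℂ} (hx : ‖x‖ ^ 2 ≤ 9 / 16 * (n + 1)) :
    ‖weight (n + 1) x‖ ≤ 1 / 2 * ‖weight n x‖ := by
  have hrec := congrArg norm (weight_succ_mul n x)
  simp only [norm_mul, norm_pow, norm_natCast] at hrec
  push_cast at hrec
  set m : ℝ := ((n : ℝ) + 1) ^ 2 with hm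
  set D : ℝ := (2 * n + 2) * (2 * n + 3) with hD
  have hmD : m ≤ D / 4 := by rw [hm, hD]; nlinarith [n.cast_nonneg (α := ℝ)]
  have hlead : (4 * n + 1) * (4 * n + 3) ≤ 4 * D := by rw [hD]; nlinarith [n.cast_nonneg (α := ℝ)]
  have hbound : 7 / 16 * (4 * D ^ 7 * m) * ‖weight (n + 1) x‖ ≤
      1 / 4096 * (4 * D ^ 7 * m) * ‖weight n x‖ :=
    calc _ = ‖weight (n + 1) x‖ * (7 / 16 * m) * (4 * D ^ 7) := by ring
      _ ≤ ‖weight (n + 1) x‖ * ‖((n : ℂ) + 1) ^ 2 - x ^ 2‖ * (4 * D ^ 7) := by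
        have hden := le_norm_natCast_sq_sub_sq hx
        gcongr
      _ = (4 * n + 1) * (4 * n + 3) * ‖((n : ℂ) + 1 / 2) ^ 2 - x ^ 2‖ ^ 7 * ‖weight n x‖ := hrec
      _ ≤ 4 * D * (m * (D / 4) ^ 6) * ‖weight n x‖ := by
        have hnum := norm_natCast_add_half_sq_sub_sq_le hx
        rw [pow_succ' _ 6]
        gcongr
        exact hnum.trans hmD
      _ = _ := by ring
  have hpos : 0 < 4 * D ^ 7 * m := by rw [hm]; positivity
  nlinarith [norm_nonneg (weight n x), norm_nonneg (weight (n + 1) x)]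

lemma exists_summable_bound_numPoly :
    ∃ (k : ℕ) (u : ℕ → ℝ), Summable u ∧ (∀ n, 0 ≤ u n) ∧
      ∀ (n : ℕ) (x : ℂ), ‖numPoly n x‖ * (1 / 2) ^ n ≤ (1 + ‖x‖) ^ k * u n := by
  refine exists_summable_bound_of_hasTemperateGrowth (f := fun p : ℂ × ℂ => numPoly p.1 p.2) ?_
    one_half_pos one_half_lt_one
  simp only [numPoly]
  fun_prop

lemma exists_norm_weight_le (R : ℝ) :
    ∃ C : ℝ, 0 ≤ C ∧ ∀ (n : ℕ) (x : ℂ), ‖x‖ ≤ R → ‖weight n x‖ ≤ C * (1 / 2) ^ n := by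
  obtain ⟨N, hN⟩ := exists_nat_ge (16 / 9 * R ^ 2)
  obtain ⟨C, hC, h⟩ := exists_norm_le_mul_pow_of_eventually_norm_succ_le
    (isCompact_closedBall (0 : ℂ) R) (f := weight)
    (fun n => (differentiable_weight n).continuous.continuousOn) one_half_pos <| by
      filter_upwards [eventually_ge_atTop N] with n hn x hx
      have hxR : ‖x‖ ^ 2 ≤ R ^ 2 := by
        gcongr
        exact mem_closedBall_zero_iff.mp hx
      have hNn : (N : ℝ) ≤ n := Nat.cast_le.mpr hn
      exact norm_weight_succ_le (by linarith)
  exact ⟨C, hC, fun n x hx => h n x (mem_closedBall_zero_iff.mpr hx)⟩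

lemma exists_summable_bound_summand (R : ℝ) :
    ∃ u : ℕ → ℝ, Summable u ∧ ∀ (n : ℕ) (x : ℂ), ‖x‖ ≤ R → ‖summand n x‖ ≤ u n := by
  obtain ⟨C, hC, hweight⟩ := exists_norm_weight_le R
  obtain ⟨k, u, hu, hu_nonneg, hpoly⟩ := exists_summable_bound_numPoly
  refine ⟨fun n => C * ((1 + R) ^ k * u n), (hu.mul_left _).mul_left _, fun n x hx => ?_⟩
  have hun := hu_nonneg n
  calc ‖summand n x‖ = ‖numPoly n x‖ * ‖weight n x‖ := norm_mul _ _
    _ ≤ ‖numPoly n x‖ * (C * (1 / 2) ^ n) := by gcongr; exact hweight n x hx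
    _ = C * (‖numPoly n x‖ * (1 / 2) ^ n) := by ring
    _ ≤ C * ((1 + ‖x‖) ^ k * u n) := mul_le_mul_of_nonneg_left (hpoly n x) hC
    _ ≤ C * ((1 + R) ^ k * u n) := by gcongr

lemma summable_summand (x : ℂ) : Summable fun n => summand n x := by
  obtain ⟨u, hu, h⟩ := exists_summable_bound_summand ‖x‖
  exact hu.of_norm_bounded fun n => h n x le_rfl

lemma differentiable_interpolant : Differentiable ℂ interpolant := by
  intro x
  obtain ⟨u, hu, h⟩ := exists_summable_bound_summand (‖x‖ + 1)
  have hball : DifferentiableOn ℂ interpolant (Metric.ball 0 (‖x‖ + 1)) :=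
    differentiableOn_tsum_of_summable_norm hu
      (fun n => (differentiable_summand n).differentiableOn) Metric.isOpen_ball
      fun n y hy => h n y (mem_ball_zero_iff.mp hy).le
  exact hball.differentiableAt (Metric.isOpen_ball.mem_nhds (by simp))

lemma tendsto_certificate (x : ℂ) : Tendsto (certificate · x) atTop (𝓝 0) := by
  let g : ℂ × ℂ → ℂ := fun p => (4 * p.1 + 1) * (4 * p.1 + 3) * (p.1 + 1 / 2 + p.2) ^ 7 *
    (p.2 + 1 / 2) * ((p.1 + 1) ^ 2 + 3 * (p.2 + 1 / 2) ^ 2)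
  have hcert : ∀ n, certificate n x * (n + 1 + x) = g (n, x) * weight n x := fun n => by
    simp only [certificate, weight, invGamma_eq_mul_invGammaShift, g]
    ring
  obtain ⟨C, hC, hweight⟩ := exists_norm_weight_le ‖x‖
  obtain ⟨k, u, hu, -, hg⟩ := exists_summable_bound_of_hasTemperateGrowth (f := g)
    (by fun_prop) one_half_pos one_half_lt_one
  have hlim : Tendsto (fun n => C * ((1 + ‖x‖) ^ k * u n)) atTop (𝓝 0) := by
    simpa using (hu.tendsto_atTop_zero.const_mul ((1 + ‖x‖) ^ k)).const_mul C
  obtain ⟨N, hN⟩ := exists_nat_ge ‖x‖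
  refine squeeze_zero_norm' ?_ hlim
  filter_upwards [eventually_ge_atTop N] with n hn
  have hfar : 1 ≤ ‖(n : ℂ) + 1 + x‖ := by
    have hNn : (N : ℝ) ≤ n := Nat.cast_le.mpr hn
    have h := norm_sub_le ((n : ℂ) + 1 + x) x
    rw [add_sub_cancel_right, ← Nat.cast_add_one, norm_natCast] at h
    push_cast at h
    linarith
  calc ‖certificate n x‖ ≤ ‖certificate n x‖ * ‖(n : ℂ) + 1 + x‖ :=
        le_mul_of_one_le_right (norm_nonneg _) hfar
    _ = ‖g (n, x)‖ * ‖weight n x‖ := by rw [← norm_mul, hcert, norm_mul]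
    _ ≤ ‖g (n, x)‖ * (C * (1 / 2) ^ n) := by gcongr; exact hweight n x le_rfl
    _ = C * (‖g (n, x)‖ * (1 / 2) ^ n) := by ring
    _ ≤ C * ((1 + ‖x‖) ^ k * u n) := mul_le_mul_of_nonneg_left (hg n x) hC

lemma interpolant_add_one (x : ℂ) : interpolant (x + 1) = -interpolant x := by
  have hsum := (summable_summand x).hasSum.add (summable_summand (x + 1)).hasSum
  have hlim := (tendsto_add_atTop_iff_nat 1).mpr hsum.tendsto_sum_nat
  simp only [sum_summand_add] at hlim
  exact eq_neg_of_add_eq_zero_right (tendsto_nhds_unique hlim (tendsto_certificate x))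

end Convergence

section ValueAtHalf

lemma mul_invGamma_zero (x : ℂ) : x * invGamma 0 x = sin (π * x) / π := by
  have hrec := one_div_Gamma_eq_self_mul_one_div_Gamma_add_one x
  have hrefl := Gamma_mul_Gamma_one_sub x
  rw [invGamma, Nat.cast_zero, zero_add, add_comm 1 x, ← mul_assoc, ← hrec, ← mul_inv, hrefl,
    inv_div]

lemma invGamma_zero_half : invGamma 0 (1 / 2) = 2 / π := by
  have h := mul_invGamma_zero (1 / 2)
  rw [mul_one_div (π : ℂ), sin_pi_div_two] at h
  linear_combination 2 * h

lemma summand_zero (x : ℂ) :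
    summand 0 x =
      (1 / 4 - x ^ 2) ^ 3 * (((1 / 4 - x ^ 2) ^ 2 + (1 / 4 - x ^ 2) + 1) * invGamma 0 x) := by
  simp only [summand, weight, numPoly, coeff_zero, halfProd_zero, Nat.cast_zero, ofReal_one]
  ring

lemma weight_one (x : ℂ) :
    weight 1 x = (1 / 4 - x ^ 2) ^ 3 * (coeff 1 * (1 / 4 - x ^ 2) ^ 4 * invGamma 1 x) := by
  rw [weight, halfProd_succ, halfProd_zero, Nat.cast_zero]
  ring

lemma tendsto_mul_div_cosPi_cube {g : ℂ → ℂ} (hg : Continuous g) :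
    Tendsto (fun x => (1 / 4 - x ^ 2) ^ 3 * g x / cosPi x ^ 3) (𝓝[≠] (1 / 2))
      (𝓝 ((1 / π) ^ 3 * g (1 / 2))) := by
  have h := (tendsto_div_cosPi_half.pow 3).mul
    ((hg.tendsto (1 / 2)).mono_left nhdsWithin_le_nhds)
  refine h.congr fun x => ?_
  rw [div_pow, div_mul_eq_mul_div]

lemma tendsto_summand_zero_div_cosPi_cube :
    Tendsto (fun x => summand 0 x / cosPi x ^ 3) (𝓝[≠] (1 / 2)) (𝓝 (2 / π ^ 4)) := by
  have hcont := (differentiable_invGamma 0).continuous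
  simp only [summand_zero]
  convert tendsto_mul_div_cosPi_cube
    (g := fun x => ((1 / 4 - x ^ 2) ^ 2 + (1 / 4 - x ^ 2) + 1) * invGamma 0 x) (by fun_prop) using 2
  rw [invGamma_zero_half]
  ring

lemma tendsto_weight_one_div_cosPi_cube :
    Tendsto (fun x => weight 1 x / cosPi x ^ 3) (𝓝[≠] (1 / 2)) (𝓝 0) := by
  have hcont := (differentiable_invGamma 1).continuous
  simp only [weight_one]
  convert tendsto_mul_div_cosPi_cube
    (g := fun x => coeff 1 * (1 / 4 - x ^ 2) ^ 4 * invGamma 1 x) (by fun_prop) using 2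
  ring

lemma norm_weight_succ_le_weight_one {x : ℂ} (hx : ‖x‖ ≤ 3 / 4) (n : ℕ) :
    ‖weight (n + 1) x‖ ≤ (1 / 2) ^ n * ‖weight 1 x‖ := by
  induction n with
  | zero => simp
  | succ n ih =>
    have hxn : ‖x‖ ^ 2 ≤ 9 / 16 * ((n + 1 : ℕ) + 1) := by
      push_cast
      nlinarith [norm_nonneg x]
    rw [pow_succ', mul_assoc]
    exact (norm_weight_succ_le hxn).trans (by gcongr)

lemma exists_norm_interpolant_sub_summand_zero_le :
    ∃ C : ℝ, ∀ x : ℂ, ‖x‖ ≤ 3 / 4 → ‖interpolant x - summand 0 x‖ ≤ C * ‖weight 1 x‖ := by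
  obtain ⟨k, u, hu, hu_nonneg, hpoly⟩ := exists_summable_bound_numPoly
  have hu_succ := (summable_nat_add_iff 1).mpr hu
  refine ⟨2 * 2 ^ k * ∑' n, u (n + 1), fun x hx => ?_⟩
  have hterm : ∀ n, ‖summand (n + 1) x‖ ≤ 2 * 2 ^ k * ‖weight 1 x‖ * u (n + 1) := fun n => by
    have hun := hu_nonneg (n + 1)
    calc ‖summand (n + 1) x‖ = ‖numPoly (n + 1 : ℕ) x‖ * ‖weight (n + 1) x‖ := norm_mul _ _
      _ ≤ ‖numPoly (n + 1 : ℕ) x‖ * ((1 / 2) ^ n * ‖weight 1 x‖) :=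
        mul_le_mul_of_nonneg_left (norm_weight_succ_le_weight_one hx n) (norm_nonneg _)
      _ = 2 * ‖weight 1 x‖ * (‖numPoly (n + 1 : ℕ) x‖ * (1 / 2) ^ (n + 1)) := by ring
      _ ≤ 2 * ‖weight 1 x‖ * ((1 + ‖x‖) ^ k * u (n + 1)) :=
        mul_le_mul_of_nonneg_left (hpoly _ x) (by positivity)
      _ ≤ 2 * ‖weight 1 x‖ * (2 ^ k * u (n + 1)) := by
        gcongr
        linarith
      _ = _ := by ring
  rw [interpolant, (summable_summand x).tsum_eq_zero_add, add_sub_cancel_left]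
  refine (tsum_of_norm_bounded (hu_succ.mul_left _).hasSum hterm).trans_eq ?_
  rw [tsum_mul_left]
  ring

lemma tendsto_interpolant_div_cosPi_cube :
    Tendsto (fun x => interpolant x / cosPi x ^ 3) (𝓝[≠] (1 / 2)) (𝓝 (2 / π ^ 4)) := by
  obtain ⟨C, hC⟩ := exists_norm_interpolant_sub_summand_zero_le
  have hrest : Tendsto (fun x => (interpolant x - summand 0 x) / cosPi x ^ 3) (𝓝[≠] (1 / 2))
      (𝓝 0) := by
    refine squeeze_zero_norm' ?_ (by simpa using tendsto_weight_one_div_cosPi_cube.norm.const_mul C)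
    filter_upwards [nhdsWithin_le_nhds (Metric.ball_mem_nhds (1 / 2 : ℂ) (ε := 1 / 4)
      (by norm_num))] with x hx
    have hx' : ‖x‖ ≤ 3 / 4 := by
      have hhalf : ‖(1 / 2 : ℂ)‖ = 1 / 2 := by norm_num
      linarith [norm_le_norm_sub_add x (1 / 2), mem_ball_iff_norm.mp hx]
    rw [norm_div, norm_pow, mul_div_assoc']
    gcongr
    exact hC x hx'
  have h := tendsto_summand_zero_div_cosPi_cube.add hrest
  rw [add_zero] at h
  exact h.congr fun x => by ring

end ValueAtHalf

section Growth

lemma prod_sq_add_le_of_le {n : ℕ} {v : ℝ} (hn : n ≤ v) :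
    ∏ j ∈ Finset.range n, (((j : ℝ) + 1) ^ 2 + 2 * v ^ 2) ≤
      (n.factorial : ℝ) ^ 2 * 3 ^ n * Real.exp (2 * v) := by
  have hfactor : ∀ j ∈ Finset.range n, ((j : ℝ) + 1) ^ 2 + 2 * v ^ 2 ≤ 3 * v ^ 2 := fun j hj => by
    have hj' : (j : ℝ) + 1 ≤ v := le_trans (mod_cast Finset.mem_range.mp hj) hn
    have hsq : ((j : ℝ) + 1) ^ 2 ≤ v ^ 2 := by gcongr
    linarith
  have hexp : v ^ n ≤ n.factorial * Real.exp v := by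
    have h := Real.pow_div_factorial_le_exp v (n.cast_nonneg.trans hn) n
    rwa [div_le_iff₀' (by positivity)] at h
  have hv : 0 ≤ v := n.cast_nonneg.trans hn
  calc _ ≤ ∏ j ∈ Finset.range n, (3 * v ^ 2) :=
        Finset.prod_le_prod (fun j _ => by positivity) hfactor
    _ = 3 ^ n * (v ^ n) ^ 2 := by
      rw [Finset.prod_const, Finset.card_range, mul_pow]
      ring
    _ ≤ 3 ^ n * (n.factorial * Real.exp v) ^ 2 := by gcongr
    _ = _ := by
      rw [mul_pow, ← Real.exp_nat_mul]
      push_cast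
      ring

lemma prod_sq_add_le (n : ℕ) {v : ℝ} (hv : 0 ≤ v) :
    ∏ j ∈ Finset.range n, (((j : ℝ) + 1) ^ 2 + 2 * v ^ 2) ≤
      (n.factorial : ℝ) ^ 2 * 3 ^ n * Real.exp (2 * v) := by
  induction n with
  | zero => simpa using hv
  | succ n ih =>
    rcases le_or_gt ((n + 1 : ℕ) : ℝ) v with h | h
    · exact prod_sq_add_le_of_le h
    · have hfactor : ((n : ℝ) + 1) ^ 2 + 2 * v ^ 2 ≤ 3 * ((n : ℝ) + 1) ^ 2 := by
        have hsq : v ^ 2 ≤ ((n : ℝ) + 1) ^ 2 := by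
          gcongr
          exact_mod_cast h.le
        linarith
      rw [Finset.prod_range_succ, Nat.factorial_succ]
      calc _ ≤ ((n.factorial : ℝ) ^ 2 * 3 ^ n * Real.exp (2 * v)) * (3 * ((n : ℝ) + 1) ^ 2) := by
            gcongr
        _ = _ := by
          push_cast
          ring

lemma sq_norm_ofReal_sub (t : ℝ) (x : ℂ) : ‖(t : ℂ) - x‖ ^ 2 = (t - x.re) ^ 2 + x.im ^ 2 := by
  rw [Complex.sq_norm, normSq_apply, sub_re, sub_im, ofReal_re, ofReal_im]
  ring

lemma norm_natCast_add_half_sub_le {x : ℂ} (hx : x.re ≤ 1 / 2) (j : ℕ) :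
    ‖(j : ℂ) + 1 / 2 - x‖ ≤ ‖(j : ℂ) + 1 - x‖ := by
  rw [← sq_le_sq₀ (norm_nonneg _) (norm_nonneg _), natCast_add_half, ← Nat.cast_add_one,
    ← ofReal_natCast, sq_norm_ofReal_sub, sq_norm_ofReal_sub]
  push_cast
  nlinarith [j.cast_nonneg (α := ℝ)]

lemma norm_natCast_add_half_sq_sub_sq_le_norm {x : ℂ} (hx : |x.re| ≤ 1 / 2) (j : ℕ) :
    ‖((j : ℂ) + 1 / 2) ^ 2 - x ^ 2‖ ≤ ‖((j : ℂ) + 1) ^ 2 - x ^ 2‖ := by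
  obtain ⟨hlower, hupper⟩ := abs_le.mp hx
  have hsub := norm_natCast_add_half_sub_le hupper j
  have hadd := norm_natCast_add_half_sub_le (x := -x) (by simpa using by linarith) j
  rw [sub_neg_eq_add, sub_neg_eq_add] at hadd
  rw [sq_sub_sq, sq_sub_sq, norm_mul, norm_mul]
  gcongr

lemma sq_norm_natCast_add_half_sub_le {x : ℂ} (hx : |x.re| ≤ 1 / 2) (j : ℕ) :
    ‖(j : ℂ) + 1 / 2 - x‖ ^ 2 ≤ ((j : ℝ) + 1) ^ 2 + x.im ^ 2 := by
  obtain ⟨hlower, hupper⟩ := abs_le.mp hx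
  rw [natCast_add_half, sq_norm_ofReal_sub]
  nlinarith [j.cast_nonneg (α := ℝ)]

lemma norm_natCast_add_half_sq_sub_sq_le_add_im_sq {x : ℂ} (hx : |x.re| ≤ 1 / 2) (j : ℕ) :
    ‖((j : ℂ) + 1 / 2) ^ 2 - x ^ 2‖ ≤ ((j : ℝ) + 1) ^ 2 + x.im ^ 2 := by
  have hsub := sq_norm_natCast_add_half_sub_le hx j
  have hadd := sq_norm_natCast_add_half_sub_le (x := -x) (by simpa using hx) j
  rw [sub_neg_eq_add, neg_im, neg_sq] at hadd
  rw [sq_sub_sq, norm_mul]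
  nlinarith [sq_nonneg (‖(j : ℂ) + 1 / 2 + x‖ - ‖(j : ℂ) + 1 / 2 - x‖)]

/-- The factor `3 ^ n` is affordable because of the `4 ^ n` in `coeff_le`; the infinite product
`∏ (1 + x² / j²)` alone would give the exponent `π` in place of `3 / 2`, too much for
`stripGrowth_interpolant`. -/
lemma norm_halfProd_le {x : ℂ} (hx : |x.re| ≤ 1 / 2) (n : ℕ) :
    ‖halfProd n x‖ ≤ (n.factorial : ℝ) ^ 2 * 3 ^ n * Real.exp (3 / 2 * |x.im|) := by
  rw [halfProd, norm_prod]
  calc _ ≤ ∏ j ∈ Finset.range n, (((j : ℝ) + 1) ^ 2 + 2 * (3 / 4 * |x.im|) ^ 2) := by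
        refine Finset.prod_le_prod (fun _ _ => norm_nonneg _) fun j _ => ?_
        refine (norm_natCast_add_half_sq_sub_sq_le_add_im_sq hx j).trans ?_
        rw [mul_pow, sq_abs]
        linarith [sq_nonneg x.im]
    _ ≤ _ := prod_sq_add_le n (by positivity)
    _ = _ := by ring_nf

lemma norm_invGamma_zero_le {x : ℂ} (hx : 1 ≤ |x.im|) :
    ‖invGamma 0 x‖ ≤ Real.exp (π * |x.im|) := by
  have h := congrArg norm (mul_invGamma_zero x)
  rw [norm_mul, norm_div, norm_real, Real.norm_of_nonneg Real.pi_pos.le] at h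
  calc ‖invGamma 0 x‖ ≤ ‖x‖ * ‖invGamma 0 x‖ :=
        le_mul_of_one_le_left (norm_nonneg _) (hx.trans (abs_im_le_norm x))
    _ = ‖sin (π * x)‖ / π := h
    _ ≤ ‖sin (π * x)‖ := div_le_self (norm_nonneg _) (by linarith [Real.pi_gt_three])
    _ ≤ _ := by
      rw [← abs_im_pi_mul]
      exact norm_sin_le_exp _

lemma norm_halfProd_mul_invGamma_le {x : ℂ} (hx : |x.re| ≤ 1 / 2) (n : ℕ) :
    ‖halfProd n x * invGamma n x‖ ≤ ‖invGamma 0 x‖ := by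
  induction n with
  | zero => rw [halfProd_zero, one_mul]
  | succ n ih =>
    refine le_trans ?_ ih
    rw [halfProd_succ, invGamma_eq_mul_invGamma_succ n, mul_assoc, norm_mul, norm_mul, norm_mul,
      norm_mul]
    gcongr
    exact norm_natCast_add_half_sq_sub_sq_le_norm hx n

lemma risingFactorial_half_nonneg (n : ℕ) : 0 ≤ risingFactorial (1 / 2) n :=
  Finset.prod_nonneg fun j _ => by positivity

lemma risingFactorial_one (n : ℕ) : risingFactorial 1 n = n.factorial := by
  rw [risingFactorial, ← Finset.prod_range_add_one_eq_factorial]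
  push_cast
  exact Finset.prod_congr rfl fun j _ => add_comm _ _

lemma risingFactorial_half_le_factorial (n : ℕ) : risingFactorial (1 / 2) n ≤ n.factorial := by
  rw [← risingFactorial_one]
  exact Finset.prod_le_prod (fun j _ => by positivity) fun j _ => by linarith

lemma four_pow_mul_factorial_sq_le (n : ℕ) :
    4 ^ n * n.factorial ^ 2 ≤ (2 * n + 1).factorial := by
  induction n with
  | zero => simp
  | succ n ih =>
    rw [mul_add_one, Nat.factorial_succ (2 * n + 1 + 1), Nat.factorial_succ (2 * n + 1),
      Nat.factorial_succ n]
    calc 4 ^ (n + 1) * ((n + 1) * n.factorial) ^ 2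
        = (2 * n + 2) * (2 * n + 2) * (4 ^ n * n.factorial ^ 2) := by ring
      _ ≤ (2 * n + 3) * (2 * n + 2) * (2 * n + 1).factorial := by gcongr; omega
      _ = _ := by ring

lemma coeff_nonneg (n : ℕ) : 0 ≤ coeff n :=
  div_nonneg (risingFactorial_half_nonneg _) (by positivity)

lemma coeff_le (n : ℕ) : coeff n ≤ 1 / ((4 : ℝ) ^ n * (n.factorial : ℝ) ^ 2) ^ 6 := by
  have hfact : (4 : ℝ) ^ n * (n.factorial : ℝ) ^ 2 ≤ ((2 * n + 1).factorial : ℝ) :=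
    mod_cast four_pow_mul_factorial_sq_le n
  have hrising : risingFactorial (1 / 2) (2 * n) ≤ ((2 * n + 1).factorial : ℝ) :=
    (risingFactorial_half_le_factorial _).trans
      (Nat.cast_le.mpr (Nat.factorial_le (Nat.le_succ _)))
  calc coeff n ≤ ((2 * n + 1).factorial : ℝ) / ((2 * n + 1).factorial : ℝ) ^ 7 := by
        rw [coeff]
        gcongr
    _ = 1 / ((2 * n + 1).factorial : ℝ) ^ 6 := by field_simp
    _ ≤ _ := by gcongr

lemma coeff_mul_norm_halfProd_pow_le {x : ℂ} (hx : |x.re| ≤ 1 / 2) (n : ℕ) :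
    coeff n * ‖halfProd n x‖ ^ 6 ≤ (1 / 2) ^ n * Real.exp (9 * |x.im|) := by
  have hexp : Real.exp (3 / 2 * |x.im|) ^ 6 = Real.exp (9 * |x.im|) := by
    rw [← Real.exp_nat_mul]
    ring_nf
  calc coeff n * ‖halfProd n x‖ ^ 6
      ≤ 1 / ((4 : ℝ) ^ n * (n.factorial : ℝ) ^ 2) ^ 6 *
        ((n.factorial : ℝ) ^ 2 * 3 ^ n * Real.exp (3 / 2 * |x.im|)) ^ 6 := by
        gcongr
        · exact coeff_le n
        · exact norm_halfProd_le hx n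
    _ = ((3 / 4) ^ 6) ^ n * Real.exp (9 * |x.im|) := by
      rw [← hexp, ← pow_mul, mul_comm 6 n, pow_mul, div_pow]
      field_simp
    _ ≤ _ := by
      gcongr
      norm_num

lemma norm_weight_le_exp {x : ℂ} (hre : |x.re| ≤ 1 / 2) (him : 1 ≤ |x.im|) (n : ℕ) :
    ‖weight n x‖ ≤ (1 / 2) ^ n * Real.exp ((9 + π) * |x.im|) := by
  have hsplit : weight n x = coeff n * halfProd n x ^ 6 * (halfProd n x * invGamma n x) := by
    rw [weight]
    ring
  have hgamma := (norm_halfProd_mul_invGamma_le hre n).trans (norm_invGamma_zero_le him)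
  rw [hsplit, norm_mul, norm_mul, norm_pow, norm_real, Real.norm_of_nonneg (coeff_nonneg n),
    add_mul, Real.exp_add, ← mul_assoc]
  exact mul_le_mul (coeff_mul_norm_halfProd_pow_le hre n) hgamma (norm_nonneg _) (by positivity)

lemma stripGrowth_interpolant : StripGrowth interpolant ((3 + 1) * π) := by
  obtain ⟨k, u, hu, hu_nonneg, hpoly⟩ := exists_summable_bound_numPoly
  obtain ⟨C, hC⟩ := stripGrowth_one_add_norm_pow k (ε := 3 * π - 9)
    (by linarith [Real.pi_gt_three])
  refine ⟨C * ∑' n, u n, fun x hre him => ?_⟩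
  have hpow : (1 + ‖x‖) ^ k ≤ C * Real.exp ((3 * π - 9) * |x.im|) :=
    (le_abs_self _).trans (hC x hre him)
  have hterm : ∀ n, ‖summand n x‖ ≤ C * Real.exp ((3 + 1) * π * |x.im|) * u n := fun n => by
    have hun := hu_nonneg n
    calc ‖summand n x‖ = ‖numPoly n x‖ * ‖weight n x‖ := norm_mul _ _
      _ ≤ ‖numPoly n x‖ * ((1 / 2) ^ n * Real.exp ((9 + π) * |x.im|)) :=
        mul_le_mul_of_nonneg_left (norm_weight_le_exp hre him n) (norm_nonneg _)
      _ = ‖numPoly n x‖ * (1 / 2) ^ n * Real.exp ((9 + π) * |x.im|) := by ring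
      _ ≤ C * Real.exp ((3 * π - 9) * |x.im|) * u n * Real.exp ((9 + π) * |x.im|) :=
        mul_le_mul_of_nonneg_right
          ((hpoly n x).trans (mul_le_mul_of_nonneg_right hpow hun)) (Real.exp_pos _).le
      _ = C * (Real.exp ((3 * π - 9) * |x.im|) * Real.exp ((9 + π) * |x.im|)) * u n := by ring
      _ = _ := by
        rw [← Real.exp_add]
        ring_nf
  refine (tsum_of_norm_bounded (hu.mul_left _).hasSum hterm).trans_eq ?_
  rw [tsum_mul_left]
  ring

end Growth

section SpecialValue

theorem interpolant_eq (x : ℂ) : interpolant x = 2 / π ^ 4 * cosPi x ^ 3 :=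
  eq_mul_cosPi_pow 3 differentiable_interpolant
    (fun x => (interpolant_add_one x).trans (by ring)) tendsto_interpolant_div_cosPi_cube
    (by exact_mod_cast stripGrowth_interpolant) x

/-- The summand of the Gourevich series. -/
noncomputable def gourevichTerm (n : ℕ) : ℝ :=
  (1 / 2 ^ 6 : ℝ) ^ n * (risingFactorial (1 / 2) n) ^ 7 / (risingFactorial 1 n) ^ 7 *
    (168 * (n : ℝ) ^ 3 + 76 * (n : ℝ) ^ 2 + 14 * (n : ℝ) + 1)

lemma gourevichTerm_nonneg (n : ℕ) : 0 ≤ gourevichTerm n := by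
  have hhalf := risingFactorial_half_nonneg n
  rw [gourevichTerm, risingFactorial_one]
  positivity

/-- The polynomial factor left over when the terms of index `2n` and `2n + 1` of the Gourevich
series are added. -/
noncomputable def pairPoly {K : Type*} [Field K] (n : K) : K :=
  (2 * n + 1) ^ 7 * (168 * (2 * n) ^ 3 + 76 * (2 * n) ^ 2 + 14 * (2 * n) + 1) +
    (2 * n + 1 / 2) ^ 7 / 64 *
      (168 * (2 * n + 1) ^ 3 + 76 * (2 * n + 1) ^ 2 + 14 * (2 * n + 1) + 1)

lemma ofReal_pairPoly (t : ℝ) : ((pairPoly t : ℝ) : ℂ) = pairPoly (t : ℂ) := by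
  simp only [pairPoly]
  push_cast
  rfl

lemma gourevichTerm_add (n : ℕ) :
    gourevichTerm (2 * n) + gourevichTerm (2 * n + 1) =
      coeff n * (risingFactorial (1 / 2) (2 * n) / 4 ^ n) ^ 6 * pairPoly (n : ℝ) := by
  have hpow : (1 / 2 ^ 6 : ℝ) ^ (2 * n) = 1 / (4 ^ n) ^ 6 := by
    rw [one_div_pow, pow_mul, ← pow_mul _ n 6, mul_comm n 6, pow_mul]
    norm_num
  rw [gourevichTerm, gourevichTerm, coeff, risingFactorial_one, risingFactorial_one,
    risingFactorial_succ, pow_succ _ (2 * n), hpow, Nat.factorial_succ, pairPoly]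
  push_cast
  field_simp
  ring

lemma halfProd_quarter (n : ℕ) :
    halfProd n (1 / 4) = (risingFactorial (1 / 2) (2 * n) / 4 ^ n : ℝ) := by
  induction n with
  | zero => simp [halfProd, risingFactorial]
  | succ n ih =>
    rw [halfProd_succ, ih, mul_add_one, risingFactorial_succ, risingFactorial_succ]
    push_cast
    field_simp
    ring

lemma sin_pi_mul_quarter : sin (π * (1 / 4)) = (√2 / 2 : ℝ) := by
  rw [← Real.sin_pi_div_four]
  push_cast
  rw [mul_one_div]

lemma cosPi_quarter : cosPi (1 / 4) = (√2 / 2 : ℝ) := by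
  rw [cosPi, ← Real.cos_pi_div_four]
  push_cast
  rw [mul_one_div]

lemma halfProd_mul_invGamma_quarter (n : ℕ) :
    halfProd n (1 / 4) * invGamma n (1 / 4) * (n + 1 / 4) = (√2 / 2 : ℝ) / π := by
  induction n with
  | zero =>
    rw [← sin_pi_mul_quarter, ← mul_invGamma_zero, halfProd_zero, Nat.cast_zero]
    ring
  | succ n ih =>
    rw [← ih, halfProd_succ, invGamma_eq_mul_invGamma_succ n]
    push_cast
    ring

lemma numPoly_quarter (n : ℂ) : numPoly n (1 / 4) = (n + 1 / 4) / 32 * pairPoly n := by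
  simp only [numPoly, pairPoly]
  ring

lemma summand_quarter (n : ℕ) :
    summand n (1 / 4) =
      (√2 / (64 * π) * (gourevichTerm (2 * n) + gourevichTerm (2 * n + 1)) : ℝ) := by
  have h := halfProd_mul_invGamma_quarter n
  rw [halfProd_quarter] at h
  rw [gourevichTerm_add, summand, weight, numPoly_quarter, halfProd_quarter]
  push_cast [ofReal_pairPoly] at h ⊢
  linear_combination coeff n * (risingFactorial (1 / 2) (2 * n) / 4 ^ n : ℂ) ^ 6 / 32 *
    pairPoly (n : ℂ) * h

lemma hasSum_gourevichTerm_add :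
    HasSum (fun n => gourevichTerm (2 * n) + gourevichTerm (2 * n + 1)) (32 / π ^ 3) := by
  have hsqrt : √2 ^ 2 = 2 := Real.sq_sqrt zero_le_two
  have hval : 64 * π / √2 * (2 / π ^ 4 * (√2 / 2) ^ 3) = 32 / π ^ 3 := by
    field_simp
    rw [hsqrt]
    norm_num
  have h : HasSum (summand · (1 / 4)) (2 / π ^ 4 * cosPi (1 / 4) ^ 3) :=
    interpolant_eq (1 / 4) ▸ (summable_summand (1 / 4)).hasSum
  simp only [summand_quarter, cosPi_quarter] at h
  have hreal : HasSum
      (fun n => √2 / (64 * π) * (gourevichTerm (2 * n) + gourevichTerm (2 * n + 1)))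
      (2 / π ^ 4 * (√2 / 2) ^ 3) := by exact_mod_cast h
  rw [← hval]
  refine (hreal.mul_left (64 * π / √2)).congr_fun fun n => ?_
  field_simp

theorem hasSum_gourevichTerm : HasSum gourevichTerm (32 / π ^ 3) := by
  have h := hasSum_gourevichTerm_add
  have heven : Summable fun n => gourevichTerm (2 * n) :=
    h.summable.of_nonneg_of_le (fun n => gourevichTerm_nonneg _)
      fun n => le_add_of_nonneg_right (gourevichTerm_nonneg _)
  have hodd : Summable fun n => gourevichTerm (2 * n + 1) :=
    h.summable.of_nonneg_of_le (fun n => gourevichTerm_nonneg _)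
      fun n => le_add_of_nonneg_left (gourevichTerm_nonneg _)
  rw [h.unique (heven.hasSum.add hodd.hasSum)]
  exact heven.hasSum.even_add_odd hodd.hasSum

end SpecialValue

end Gourevich

end

/-- `∑_{n≥0} (1/2^6)^n (1/2)ₙ^7/(1)ₙ^7 (168n³+76n²+14n+1) = 32/π³` (Gourevich). -/
theorem gourevich_series :
    ∑' n : ℕ, ((1 / 2 ^ 6 : ℝ) ^ n * (risingFactorial (1 / 2) n) ^ 7 /
        (risingFactorial 1 n) ^ 7 *
        (168 * (n : ℝ) ^ 3 + 76 * (n : ℝ) ^ 2 + 14 * (n : ℝ) + 1))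
      = 32 / Real.pi ^ 3 :=
  Gourevich.hasSum_gourevichTerm.tsum_eq
end
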